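/- arXiv:1208.2785 — 5 statements merged into one kernel-verified Lean document; each statement's English description precedes it below -/
import Mathlib

section
/- For every finite set P of n points in ℝ², there exist points p, q ∈ P such that every axis-parallel rectangle R with |R ∩ P| > (5/8)·n contains p or q. In other words, every finite planar point set admits a strong (5/8)-net of size 2 with respect to axis-parallel rectangles. -/
/-- An axis-parallel rectangle in ℝ²: a product of closed intervals. -/
def IsRect (R : Set (EuclideanSpace ℝ (Fin 2))) : Prop :=
  ∃ a b c d : ℝ, R = {x | a ≤ x 0 ∧ x 0 ≤ b ∧ c ≤ x 1 ∧ x 1 ≤ d}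

/-- At most `k - 1` points have rank less than `k`. -/
lemma rank_lt_card {α : Type*} (S : Finset α) (f : α → ℝ) (k : ℕ) :
    (S.filter (fun s => (S.filter (fun t => f t ≤ f s)).card < k)).card ≤ k - 1 := by
  classical
  set B := S.filter (fun s => (S.filter (fun t => f t ≤ f s)).card < k) with hB
  rcases B.eq_empty_or_nonempty with h | h
  · simp [h]
  · obtain ⟨m, hm, hmax⟩ := B.exists_max_image f h
    have h1 : B ⊆ S.filter (fun t => f t ≤ f m) := by
      intro b hb
      exact Finset.mem_filter.2 ⟨(Finset.mem_filter.1 hb).1, hmax b hb⟩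
    have h2 := Finset.card_le_card h1
    have h3 := (Finset.mem_filter.1 hm).2
    omega

/-- `T` lies strictly on one of the four sides of `p`. -/
def SideOf {α : Type*} (x y : α → ℝ) (T : Finset α) (p : α) : Prop :=
  (∀ t ∈ T, x t < x p) ∨ (∀ t ∈ T, x p < x t) ∨ (∀ t ∈ T, y t < y p) ∨ (∀ t ∈ T, y p < y t)

lemma miss_false {α : Type*} {P T : Finset α} {k : ℕ} (hT : T ⊆ P) (hk : P.card < T.card + k)
    (B : Finset α) (hB : B ⊆ P) (hBk : k ≤ B.card) (hd : ∀ t ∈ T, t ∉ B) : False := by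
  classical
  have h1 : Disjoint T B := Finset.disjoint_left.2 hd
  have h2 := Finset.card_le_card (Finset.union_subset hT hB)
  rw [Finset.card_union_of_disjoint h1] at h2
  omega

/-- Main step: `p` is in the middle column and not too low; find `q` above it. -/
lemma coreA {α : Type*} (x y : α → ℝ) (P : Finset α) (k : ℕ) (p : α)
    (hl : k ≤ (P.filter (fun t => x t ≤ x p)).card)
    (hr : k ≤ (P.filter (fun t => x p ≤ x t)).card)
    (hv : k ≤ (P.filter (fun t => y p ≤ y t)).card)
    (hu : (P.filter (fun t => y t ≤ y p)).card < k)
    (hn : 4 * k < P.card + 3 * (P.filter (fun t => y t ≤ y p)).card + 4) :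
    ∃ q ∈ P, ∀ T ⊆ P, P.card < T.card + k → SideOf x y T p → SideOf x y T q → False := by
  classical
  set U := P.filter (fun t => y t ≤ y p) with hU
  set A := P.filter (fun t => ¬ y t ≤ y p) with hA
  have hUA : U.card + A.card = P.card := Finset.card_filter_add_card_filter_not _
  have b1 := rank_lt_card A x (k - U.card)
  have b2 := rank_lt_card A (fun t => - x t) (k - U.card)
  have b4 := rank_lt_card A y (k - U.card)
  have b3 := rank_lt_card A (fun t => - y t) (k - U.card)
  set B1 := A.filter (fun s => (A.filter (fun t => x t ≤ x s)).card < k - U.card) with hB1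
  set B2 := A.filter (fun s => (A.filter (fun t => - x t ≤ - x s)).card < k - U.card) with hB2
  set B3 := A.filter (fun s => (A.filter (fun t => - y t ≤ - y s)).card < k - U.card) with hB3
  set B4 := A.filter (fun s => (A.filter (fun t => y t ≤ y s)).card < k - U.card) with hB4
  have hc : (B1 ∪ B2 ∪ B3 ∪ B4).card < A.card := by
    have := Finset.card_union_le (B1 ∪ B2 ∪ B3) B4
    have := Finset.card_union_le (B1 ∪ B2) B3
    have := Finset.card_union_le B1 B2
    omega
  obtain ⟨q, hqA, hq⟩ := Finset.exists_mem_notMem_of_card_lt_card hc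
  simp only [Finset.mem_union, not_or] at hq
  obtain ⟨⟨⟨q1, q2⟩, q3⟩, q4⟩ := hq
  simp only [hB1, hB2, hB3, hB4, Finset.mem_filter (s := A), hqA, true_and, not_lt, neg_le_neg_iff]
    at q1 q2 q3 q4
  have hAP : A ⊆ P := Finset.filter_subset _ _
  have hUP : U ⊆ P := Finset.filter_subset _ _
  have key : ∀ (c : α → Prop) [DecidablePred c], k - U.card ≤ (A.filter c).card →
      k ≤ (U ∪ A.filter c).card := by
    intro c _ h
    rw [Finset.card_union_of_disjoint]
    · omega
    · rw [Finset.disjoint_left]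
      intro t ht ht'
      exact (Finset.mem_filter.1 (Finset.mem_filter.1 ht').1).2 (Finset.mem_filter.1 ht).2
  have sub : ∀ (c : α → Prop) [DecidablePred c], U ∪ A.filter c ⊆ P := fun c _ =>
    Finset.union_subset hUP ((Finset.filter_subset _ _).trans hAP)
  have hyq : y p < y q := not_le.1 (Finset.mem_filter.1 hqA).2
  refine ⟨q, hAP hqA, fun T hT hk hp hq => ?_⟩
  rcases hp with hp | hp | hp | hp
  · exact miss_false hT hk _ (Finset.filter_subset _ _) hr
      (fun t ht h => absurd (hp t ht) (not_lt.2 (Finset.mem_filter.1 h).2))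
  · exact miss_false hT hk _ (Finset.filter_subset _ _) hl
      (fun t ht h => absurd (hp t ht) (not_lt.2 (Finset.mem_filter.1 h).2))
  · exact miss_false hT hk _ (Finset.filter_subset _ _) hv
      (fun t ht h => absurd (hp t ht) (not_lt.2 (Finset.mem_filter.1 h).2))
  have fin : ∀ (c : α → Prop) [DecidablePred c], k - U.card ≤ (A.filter c).card →
      (∀ t ∈ T, ¬ c t) → False := by
    intro c _ h h'
    refine miss_false hT hk _ (sub c) (key c h) (fun t ht hm => ?_)
    rcases Finset.mem_union.1 hm with hm | hm
    · exact absurd (hp t ht) (not_lt.2 (Finset.mem_filter.1 hm).2)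
    · exact h' t ht (Finset.mem_filter.1 hm).2
  rcases hq with hq | hq | hq | hq
  · exact fin _ q2 (fun t ht => not_le.2 (hq t ht))
  · exact fin _ q1 (fun t ht => not_le.2 (hq t ht))
  · exact fin _ q3 (fun t ht => not_le.2 (hq t ht))
  · exact fin _ q4 (fun t ht => not_le.2 (hq t ht))

/-- `p` is low and left of the middle, but not too much so. -/
lemma coreB {α : Type*} (x y : α → ℝ) (P : Finset α) (k j : ℕ) (p : α)
    (hl : j ≤ (P.filter (fun t => x t ≤ x p)).card)
    (hl' : (P.filter (fun t => x t ≤ x p)).card < k)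
    (hr : k ≤ (P.filter (fun t => x p ≤ x t)).card)
    (hv : k ≤ (P.filter (fun t => y p ≤ y t)).card)
    (hu : j ≤ (P.filter (fun t => y t ≤ y p)).card)
    (hu' : (P.filter (fun t => y t ≤ y p)).card < k)
    (hn : 4 * k < P.card + 2 * j + 4) :
    ∃ q ∈ P, ∀ T ⊆ P, P.card < T.card + k → SideOf x y T p → SideOf x y T q → False := by
  classical
  set L := P.filter (fun t => x t ≤ x p) with hL
  set D := P.filter (fun t => y t ≤ y p) with hD
  set Q := P.filter (fun t => x p < x t ∧ y p < y t) with hQ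
  have b1 := rank_lt_card P x k
  have b2 := rank_lt_card P y k
  have b3 := rank_lt_card Q (fun t => - x t) (k - j)
  have b4 := rank_lt_card Q (fun t => - y t) (k - j)
  set B1 := P.filter (fun s => (P.filter (fun t => x t ≤ x s)).card < k) with hB1
  set B2 := P.filter (fun s => (P.filter (fun t => y t ≤ y s)).card < k) with hB2
  set B3 := Q.filter (fun s => (Q.filter (fun t => - x t ≤ - x s)).card < k - j) with hB3
  set B4 := Q.filter (fun s => (Q.filter (fun t => - y t ≤ - y s)).card < k - j) with hB4
  have hc : (B1 ∪ B2 ∪ B3 ∪ B4).card < P.card := by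
    have := Finset.card_union_le (B1 ∪ B2 ∪ B3) B4
    have := Finset.card_union_le (B1 ∪ B2) B3
    have := Finset.card_union_le B1 B2
    omega
  obtain ⟨q, hqP, hq⟩ := Finset.exists_mem_notMem_of_card_lt_card hc
  simp only [Finset.mem_union, not_or] at hq
  obtain ⟨⟨⟨q1, q2⟩, q3⟩, q4⟩ := hq
  simp only [hB1, hB2, Finset.mem_filter (s := P), hqP, true_and, not_lt] at q1 q2
  have hx : x p < x q := by
    by_contra h
    have h1 : P.filter (fun t => x t ≤ x q) ⊆ L := by
      intro t ht
      rw [Finset.mem_filter] at ht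
      exact Finset.mem_filter.2 ⟨ht.1, ht.2.trans (not_lt.1 h)⟩
    have := Finset.card_le_card h1
    omega
  have hy : y p < y q := by
    by_contra h
    have h1 : P.filter (fun t => y t ≤ y q) ⊆ D := by
      intro t ht
      rw [Finset.mem_filter] at ht
      exact Finset.mem_filter.2 ⟨ht.1, ht.2.trans (not_lt.1 h)⟩
    have := Finset.card_le_card h1
    omega
  have hqQ : q ∈ Q := Finset.mem_filter.2 ⟨hqP, hx, hy⟩
  simp only [hB3, hB4, Finset.mem_filter (s := Q), hqQ, true_and, not_lt, neg_le_neg_iff]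
    at q3 q4
  have hQP : Q ⊆ P := Finset.filter_subset _ _
  refine ⟨q, hqP, fun T hT hk hp hq => ?_⟩
  have fin : ∀ (W : Finset α) (c : α → Prop) [DecidablePred c], W ⊆ P → j ≤ W.card →
      (∀ t ∈ W, t ∉ Q) → (∀ t ∈ T, t ∉ W) →
      k - j ≤ (Q.filter c).card → (∀ t ∈ T, ¬ c t) → False := by
    intro W c _ hW hjW hWQ hTW h h'
    refine miss_false hT hk (W ∪ Q.filter c)
      (Finset.union_subset hW ((Finset.filter_subset _ _).trans hQP)) ?_ (fun t ht hm => ?_)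
    · rw [Finset.card_union_of_disjoint]
      · omega
      · rw [Finset.disjoint_left]
        intro t ht ht2
        exact hWQ t ht (Finset.mem_filter.1 ht2).1
    · rcases Finset.mem_union.1 hm with hm | hm
      · exact hTW t ht hm
      · exact h' t ht (Finset.mem_filter.1 hm).2
  have hLQ : ∀ t ∈ L, t ∉ Q := fun t h1 h2 =>
    absurd (Finset.mem_filter.1 h2).2.1 (not_lt.2 (Finset.mem_filter.1 h1).2)
  have hDQ : ∀ t ∈ D, t ∉ Q := fun t h1 h2 =>
    absurd (Finset.mem_filter.1 h2).2.2 (not_lt.2 (Finset.mem_filter.1 h1).2)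
  have main : ∀ W ⊆ P, j ≤ W.card → (∀ t ∈ W, t ∉ Q) → (∀ t ∈ T, t ∉ W) → False := by
    intro W hW hjW hWQ hTW
    rcases hq with hq | hq | hq | hq
    · exact fin W _ hW hjW hWQ hTW q3 (fun t ht => not_le.2 (hq t ht))
    · exact miss_false hT hk _ (Finset.filter_subset _ _) q1
        (fun t ht h => absurd (hq t ht) (not_lt.2 (Finset.mem_filter.1 h).2))
    · exact fin W _ hW hjW hWQ hTW q4 (fun t ht => not_le.2 (hq t ht))
    · exact miss_false hT hk _ (Finset.filter_subset _ _) q2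
        (fun t ht h => absurd (hq t ht) (not_lt.2 (Finset.mem_filter.1 h).2))
  rcases hp with hp | hp | hp | hp
  · exact miss_false hT hk _ (Finset.filter_subset _ _) hr
      (fun t ht h => absurd (hp t ht) (not_lt.2 (Finset.mem_filter.1 h).2))
  · exact main L (Finset.filter_subset _ _) hl hLQ
      (fun t ht h => absurd (hp t ht) (not_lt.2 (Finset.mem_filter.1 h).2))
  · exact miss_false hT hk _ (Finset.filter_subset _ _) hv
      (fun t ht h => absurd (hp t ht) (not_lt.2 (Finset.mem_filter.1 h).2))
  · exact main D (Finset.filter_subset _ _) hu hDQ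
      (fun t ht h => absurd (hp t ht) (not_lt.2 (Finset.mem_filter.1 h).2))

lemma SideOf.swap {α : Type*} {x y : α → ℝ} {T : Finset α} {p : α} (h : SideOf x y T p) :
    SideOf y x T p := by
  unfold SideOf at *
  tauto

lemma SideOf.negx {α : Type*} {x y : α → ℝ} {T : Finset α} {p : α} (h : SideOf x y T p) :
    SideOf (fun t => - x t) y T p := by
  unfold SideOf at *
  simp only [neg_lt_neg_iff]
  tauto

/-- All cases where the top and right sides of `p` are heavy. -/
lemma core {α : Type*} (x y : α → ℝ) (P : Finset α) (k j : ℕ) (p : α) (hpP : p ∈ P)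
    (hl : j ≤ (P.filter (fun t => x t ≤ x p)).card)
    (hr : k ≤ (P.filter (fun t => x p ≤ x t)).card)
    (hv : k ≤ (P.filter (fun t => y p ≤ y t)).card)
    (hu : j ≤ (P.filter (fun t => y t ≤ y p)).card)
    (hn : 4 * k < P.card + 2 * j + 4) :
    ∃ q ∈ P, ∀ T ⊆ P, P.card < T.card + k → SideOf x y T p → SideOf x y T q → False := by
  by_cases h1 : k ≤ (P.filter (fun t => x t ≤ x p)).card
  · by_cases h2 : k ≤ (P.filter (fun t => y t ≤ y p)).card
    · refine ⟨p, hpP, fun T hT hk hp _ => ?_⟩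
      rcases hp with hp | hp | hp | hp
      · exact miss_false hT hk _ (Finset.filter_subset _ _) hr
          (fun t ht h => absurd (hp t ht) (not_lt.2 (Finset.mem_filter.1 h).2))
      · exact miss_false hT hk _ (Finset.filter_subset _ _) h1
          (fun t ht h => absurd (hp t ht) (not_lt.2 (Finset.mem_filter.1 h).2))
      · exact miss_false hT hk _ (Finset.filter_subset _ _) hv
          (fun t ht h => absurd (hp t ht) (not_lt.2 (Finset.mem_filter.1 h).2))
      · exact miss_false hT hk _ (Finset.filter_subset _ _) h2
          (fun t ht h => absurd (hp t ht) (not_lt.2 (Finset.mem_filter.1 h).2))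
    · exact coreA x y P k p h1 hr hv (not_le.1 h2) (by omega)
  · by_cases h2 : k ≤ (P.filter (fun t => y t ≤ y p)).card
    · obtain ⟨q, hq, h⟩ := coreA y x P k p h2 hv hr (not_le.1 h1) (by omega)
      exact ⟨q, hq, fun T hT hk a b => h T hT hk a.swap b.swap⟩
    · exact coreB x y P k j p hl (not_le.1 h1) hr hv hu (not_le.1 h2) hn

lemma heavy_side {α : Type*} (x : α → ℝ) (P : Finset α) (p : α) (k : ℕ) (hp : p ∈ P)
    (hk : 2 * k ≤ P.card + 2) :
    k ≤ (P.filter (fun t => x p ≤ x t)).card ∨ k ≤ (P.filter (fun t => x t ≤ x p)).card := by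
  classical
  have h1 := Finset.card_union_add_card_inter (P.filter (fun t => x p ≤ x t))
    (P.filter (fun t => x t ≤ x p))
  have h2 : P ⊆ P.filter (fun t => x p ≤ x t) ∪ P.filter (fun t => x t ≤ x p) := by
    intro t ht
    rcases le_total (x p) (x t) with h | h
    · exact Finset.mem_union_left _ (Finset.mem_filter.2 ⟨ht, h⟩)
    · exact Finset.mem_union_right _ (Finset.mem_filter.2 ⟨ht, h⟩)
  have h3 := Finset.card_le_card h2
  have h4 : 0 < (P.filter (fun t => x p ≤ x t) ∩ P.filter (fun t => x t ≤ x p)).card :=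
    Finset.card_pos.2 ⟨p, by simp [hp]⟩
  omega

lemma abstract_net {α : Type*} (x y : α → ℝ) (P : Finset α) (hP : P.Nonempty) :
    ∃ p ∈ P, ∃ q ∈ P, ∀ T ⊆ P, 5 * P.card < 8 * T.card →
      SideOf x y T p → SideOf x y T q → False := by
  classical
  obtain ⟨k, hk⟩ : ∃ k, k = (3 * P.card + 7) / 8 := ⟨_, rfl⟩
  obtain ⟨j, hj⟩ : ∃ j, j = (P.card + 3) / 4 := ⟨_, rfl⟩
  have hpos := Finset.card_pos.2 hP
  have b1 := rank_lt_card P x j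
  have b2 := rank_lt_card P y j
  have b3 := rank_lt_card P (fun t => - x t) j
  have b4 := rank_lt_card P (fun t => - y t) j
  set B1 := P.filter (fun s => (P.filter (fun t => x t ≤ x s)).card < j) with hB1
  set B2 := P.filter (fun s => (P.filter (fun t => y t ≤ y s)).card < j) with hB2
  set B3 := P.filter (fun s => (P.filter (fun t => - x t ≤ - x s)).card < j) with hB3
  set B4 := P.filter (fun s => (P.filter (fun t => - y t ≤ - y s)).card < j) with hB4
  have hc : (B1 ∪ B2 ∪ B3 ∪ B4).card < P.card := by
    have := Finset.card_union_le (B1 ∪ B2 ∪ B3) B4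
    have := Finset.card_union_le (B1 ∪ B2) B3
    have := Finset.card_union_le B1 B2
    omega
  obtain ⟨p, hp, hq⟩ := Finset.exists_mem_notMem_of_card_lt_card hc
  simp only [Finset.mem_union, not_or] at hq
  obtain ⟨⟨⟨q1, q2⟩, q3⟩, q4⟩ := hq
  simp only [hB1, hB2, hB3, hB4, Finset.mem_filter (s := P), hp, true_and, not_lt,
    neg_le_neg_iff] at q1 q2 q3 q4
  have hn : 4 * k < P.card + 2 * j + 4 := by omega
  have hk2 : 2 * k ≤ P.card + 2 := by omega
  refine ⟨p, hp, ?_⟩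
  suffices h : ∃ q ∈ P, ∀ T ⊆ P, P.card < T.card + k → SideOf x y T p → SideOf x y T q →
      False by
    obtain ⟨q, hq, h⟩ := h
    exact ⟨q, hq, fun T hT hc => h T hT (by omega)⟩
  rcases heavy_side x P p k hp hk2 with hx | hx <;> rcases heavy_side y P p k hp hk2 with hy | hy
  · exact core x y P k j p hp q1 hx hy q2 hn
  · obtain ⟨q, hq, h⟩ := core x (fun t => - y t) P k j p hp q1 hx (by simpa using hy)
      (by simpa using q4) hn
    exact ⟨q, hq, fun T hT hk a b => h T hT hk a.swap.negx.swap b.swap.negx.swap⟩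
  · obtain ⟨q, hq, h⟩ := core (fun t => - x t) y P k j p hp (by simpa using q3)
      (by simpa using hx) hy q2 hn
    exact ⟨q, hq, fun T hT hk a b => h T hT hk a.negx b.negx⟩
  · obtain ⟨q, hq, h⟩ := core (fun t => - x t) (fun t => - y t) P k j p hp (by simpa using q3)
      (by simpa using hx) (by simpa using hy) (by simpa using q4) hn
    exact ⟨q, hq, fun T hT hk a b => h T hT hk a.negx.swap.negx.swap b.negx.swap.negx.swap⟩

/-- Every finite planar point set admits a strong (5/8)-net of size 2 with respect to
axis-parallel rectangles. -/
theorem strong_five_eighths_net_size_two (P : Finset (EuclideanSpace ℝ (Fin 2)))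
    (hP : P.Nonempty) :
    ∃ p ∈ P, ∃ q ∈ P, ∀ R : Set (EuclideanSpace ℝ (Fin 2)), IsRect R →
      (5 / 8 : ℝ) * P.card < ((R ∩ ↑P).ncard : ℝ) → p ∈ R ∨ q ∈ R := by
  classical
  obtain ⟨p, hp, q, hq, h⟩ := abstract_net (fun t : EuclideanSpace ℝ (Fin 2) => t 0)
    (fun t => t 1) P hP
  refine ⟨p, hp, q, hq, fun R hR hc => ?_⟩
  by_contra hcon
  rw [not_or] at hcon
  have hcard : (R ∩ (P : Set (EuclideanSpace ℝ (Fin 2)))).ncard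
      = (P.filter (fun t => t ∈ R)).card := by
    rw [← Set.ncard_coe_finset]
    congr 1
    ext t
    simp [and_comm]
  rw [hcard] at hc
  have hc' : 5 * P.card < 8 * (P.filter (fun t => t ∈ R)).card := by
    have : (5 : ℝ) * P.card < 8 * (P.filter (fun t => t ∈ R)).card := by linarith
    exact_mod_cast this
  obtain ⟨a, b, c, d, hR⟩ := hR
  have hmem : ∀ t, t ∈ R ↔ a ≤ t 0 ∧ t 0 ≤ b ∧ c ≤ t 1 ∧ t 1 ≤ d := by
    intro t
    rw [hR]
    exact Iff.rfl
  have side : ∀ s : EuclideanSpace ℝ (Fin 2), s ∉ R →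
      SideOf (fun t : EuclideanSpace ℝ (Fin 2) => t 0) (fun t => t 1)
        (P.filter (fun t => t ∈ R)) s := by
    intro s hs
    unfold SideOf
    simp only [Finset.mem_filter, hmem] at hs ⊢
    by_cases h1 : a ≤ s 0
    · by_cases h2 : s 0 ≤ b
      · by_cases h3 : c ≤ s 1
        · have h4 : d < s 1 := by
            by_contra h4
            exact hs ⟨h1, h2, h3, not_lt.1 h4⟩
          exact Or.inr (Or.inr (Or.inl fun t ht => by linarith [ht.2.2.2.2]))
        · exact Or.inr (Or.inr (Or.inr fun t ht => by linarith [ht.2.2.2.1]))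
      · exact Or.inl fun t ht => by linarith [ht.2.2.1]
    · exact Or.inr (Or.inl fun t ht => by linarith [ht.2.1])
  exact h _ (Finset.filter_subset _ _) hc' (side p hcon.1) (side q hcon.2)
end

section
/- For all integers x ≥ y ≥ 0 with z = ⌊(x+y)/2⌋, the quantities ε_i^R satisfy ε_{2(x+y)+1}^R ≤ max( (3/4)·ε_x^R , (ε_y^R · ε_z^R)/(ε_y^R + ε_z^R) ). -/
/-- `Q` is a strong ε-net of `P` with respect to axis-parallel rectangles. -/
def IsRectNet (P Q : Finset (EuclideanSpace ℝ (Fin 2))) (ε : ℝ) : Prop :=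
  Q ⊆ P ∧ ∀ R : Set (EuclideanSpace ℝ (Fin 2)), IsRect R →
    ε * P.card < ((R ∩ ↑P).ncard : ℝ) → ∃ q ∈ Q, q ∈ R

/-- `epsR i` is the infimum of the ε ∈ [0,1] such that every finite planar point set
admits a strong ε-net of size at most `i` with respect to axis-parallel rectangles. -/
noncomputable def epsR (i : ℕ) : ℝ :=
  sInf {ε : ℝ | ε ∈ Set.Icc (0 : ℝ) 1 ∧
    ∀ P : Finset (EuclideanSpace ℝ (Fin 2)),
      ∃ Q : Finset (EuclideanSpace ℝ (Fin 2)), Q.card ≤ i ∧ IsRectNet P Q ε}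

/-- The Euclidean plane. -/
abbrev PlaneE := EuclideanSpace ℝ (Fin 2)

theorem one_mem_epsSet (i : ℕ) : (1 : ℝ) ∈ {ε : ℝ | ε ∈ Set.Icc (0 : ℝ) 1 ∧
    ∀ P : Finset PlaneE, ∃ Q : Finset PlaneE, Q.card ≤ i ∧ IsRectNet P Q ε} := by
  refine ⟨by simp, fun P => ⟨∅, by simp, by simp, fun R _ h => ?_⟩⟩
  exfalso
  have h1 : (R ∩ (P : Set PlaneE)).ncard ≤ P.card := by
    rw [← Set.ncard_coe_finset P]
    exact Set.ncard_le_ncard Set.inter_subset_right P.finite_toSet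
  have h2 : ((R ∩ (P : Set PlaneE)).ncard : ℝ) ≤ P.card := by exact_mod_cast h1
  linarith

theorem epsR_bdd (i : ℕ) : BddBelow {ε : ℝ | ε ∈ Set.Icc (0 : ℝ) 1 ∧
    ∀ P : Finset PlaneE, ∃ Q : Finset PlaneE, Q.card ≤ i ∧ IsRectNet P Q ε} :=
  ⟨0, fun _ h => h.1.1⟩

theorem epsR_nonneg (i : ℕ) : 0 ≤ epsR i :=
  Real.sInf_nonneg fun _ h => h.1.1

theorem epsR_le_one (i : ℕ) : epsR i ≤ 1 := csInf_le (epsR_bdd i) (one_mem_epsSet i)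

/-- The infimum is attained. -/
theorem epsR_attained (i : ℕ) (P : Finset PlaneE) :
    ∃ Q : Finset PlaneE, Q.card ≤ i ∧ IsRectNet P Q (epsR i) := by
  rcases Nat.eq_zero_or_pos P.card with h0 | hpos
  · rw [Finset.card_eq_zero] at h0
    subst h0
    exact ⟨∅, by simp, by simp, fun R _ h => by simp at h⟩
  have hn : (0 : ℝ) < P.card := by exact_mod_cast hpos
  have hlt : epsR i < ((⌊epsR i * P.card⌋₊ : ℝ) + 1) / P.card := by
    rw [lt_div_iff₀ hn]
    exact Nat.lt_floor_add_one _
  obtain ⟨e, he, hel⟩ := exists_lt_of_csInf_lt ⟨1, one_mem_epsSet i⟩ hlt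
  obtain ⟨Q, hQ, hQP, hnet⟩ := he.2 P
  refine ⟨Q, hQ, hQP, fun R hR h => hnet R hR ?_⟩
  rw [lt_div_iff₀ hn] at hel
  have h3 := (Nat.floor_lt (mul_nonneg (epsR_nonneg i) hn.le)).2 h
  have h4 : (⌊epsR i * P.card⌋₊ : ℝ) + 1 ≤ ((R ∩ (P : Set PlaneE)).ncard : ℝ) := by
    exact_mod_cast h3
  linarith

theorem hit_subset (i : ℕ) (P A : Finset PlaneE) (hA : A ⊆ P) (t : ℝ)
    (ht : epsR i * A.card ≤ t) :
    ∃ Q : Finset PlaneE, Q ⊆ P ∧ Q.card ≤ i ∧ ∀ R, IsRect R →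
      (∀ p ∈ P, p ∈ R → p ∈ A) → t < ((R ∩ ↑P).ncard : ℝ) → ∃ q ∈ Q, q ∈ R := by
  obtain ⟨Q, hQ, hQA, hnet⟩ := epsR_attained i A
  refine ⟨Q, hQA.trans hA, hQ, fun R hR hRA h => hnet R hR ?_⟩
  have : R ∩ (A : Set PlaneE) = R ∩ ↑P := by
    ext p
    constructor
    · rintro ⟨h1, h2⟩
      exact ⟨h1, hA h2⟩
    · rintro ⟨h1, h2⟩
      exact ⟨h1, hRA p h2 h1⟩
  rw [this]
  linarith

theorem hit_pair (i j k : ℕ) (hk : i + j ≤ k) (P A B : Finset PlaneE) (hA : A ⊆ P) (hB : B ⊆ P)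
    (t : ℝ) (htA : epsR i * A.card ≤ t) (htB : epsR j * B.card ≤ t) :
    ∃ Q : Finset PlaneE, Q ⊆ P ∧ Q.card ≤ k ∧ ∀ R, IsRect R →
      ((∀ p ∈ P, p ∈ R → p ∈ A) ∨ (∀ p ∈ P, p ∈ R → p ∈ B)) →
      t < ((R ∩ ↑P).ncard : ℝ) → ∃ q ∈ Q, q ∈ R := by
  classical
  obtain ⟨Q1, h1, c1, n1⟩ := hit_subset i P A hA t htA
  obtain ⟨Q2, h2, c2, n2⟩ := hit_subset j P B hB t htB
  refine ⟨Q1 ∪ Q2, Finset.union_subset h1 h2,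
    (Finset.card_union_le _ _).trans (by omega), fun R hR h ht => ?_⟩
  rcases h with h | h
  · obtain ⟨q, hq, hqR⟩ := n1 R hR h ht
    exact ⟨q, Finset.mem_union_left _ hq, hqR⟩
  · obtain ⟨q, hq, hqR⟩ := n2 R hR h ht
    exact ⟨q, Finset.mem_union_right _ hq, hqR⟩

/-- The bound of the theorem. -/
noncomputable def recBound (x y : ℕ) : ℝ :=
  max ((3 / 4) * epsR x) ((epsR y * epsR ((x + y) / 2)) / (epsR y + epsR ((x + y) / 2)))

theorem hit_split_aux (x y : ℕ) (P A B : Finset PlaneE) (hA : A ⊆ P) (hB : B ⊆ P)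
    (hAB : A.card + B.card ≤ P.card) (hBA : B.card ≤ A.card)
    (h4 : 4 * A.card ≤ 3 * P.card) :
    ∃ Q : Finset PlaneE, Q ⊆ P ∧ Q.card ≤ x + y ∧ ∀ R, IsRect R →
      ((∀ p ∈ P, p ∈ R → p ∈ A) ∨ (∀ p ∈ P, p ∈ R → p ∈ B)) →
      recBound x y * P.card < ((R ∩ ↑P).ncard : ℝ) → ∃ q ∈ Q, q ∈ R := by
  have hn : (0 : ℝ) ≤ P.card := by positivity
  have hAB' : (A.card : ℝ) + B.card ≤ P.card := by exact_mod_cast hAB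
  have hBA' : (B.card : ℝ) ≤ A.card := by exact_mod_cast hBA
  have h4' : 4 * (A.card : ℝ) ≤ 3 * P.card := by exact_mod_cast h4
  have hx := epsR_nonneg x
  have hy := epsR_nonneg y
  have hz := epsR_nonneg ((x + y) / 2)
  have hM1 : (3 / 4) * epsR x ≤ recBound x y := le_max_left _ _
  have hM2 : (epsR y * epsR ((x + y) / 2)) / (epsR y + epsR ((x + y) / 2)) ≤ recBound x y :=
    le_max_right _ _
  by_cases hc : epsR ((x + y) / 2) * A.card ≤ recBound x y * P.card
  · exact hit_pair ((x + y) / 2) ((x + y) / 2) (x + y) (by omega) P A B hA hB _ hc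
      ((mul_le_mul_of_nonneg_left hBA' hz).trans hc)
  · refine hit_pair x y (x + y) le_rfl P A B hA hB _ ?_ ?_
    · calc epsR x * A.card ≤ epsR x * (3 / 4 * P.card) := by gcongr; linarith
        _ = (3 / 4 * epsR x) * P.card := by ring
        _ ≤ _ := by gcongr
    · push Not at hc
      have hc2 := (mul_le_mul_of_nonneg_right hM2 hn).trans_lt hc
      generalize epsR ((x + y) / 2) = w at *
      generalize epsR y = v at *
      have hwp : 0 < w := by
        rcases hz.lt_or_eq with h | h
        · exact h
        · subst h
          simp at hc2
      have hs : 0 < v + w := by linarith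
      refine le_trans ?_ (mul_le_mul_of_nonneg_right hM2 hn)
      rw [div_mul_eq_mul_div, div_lt_iff₀ hs] at hc2
      rw [div_mul_eq_mul_div, le_div_iff₀ hs]
      have h5 : v * P.card < A.card * (v + w) := by
        have : w * (v * P.card) < w * (A.card * (v + w)) := by linarith
        exact lt_of_mul_lt_mul_left this hwp.le
      have h6 : B.card * (v + w) ≤ w * P.card := by nlinarith
      nlinarith [mul_le_mul_of_nonneg_left h6 hy]

theorem hit_split (x y : ℕ) (P A B : Finset PlaneE) (hA : A ⊆ P) (hB : B ⊆ P)
    (hAB : A.card + B.card ≤ P.card)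
    (h4 : 4 * A.card ≤ 3 * P.card) (h4' : 4 * B.card ≤ 3 * P.card) :
    ∃ Q : Finset PlaneE, Q ⊆ P ∧ Q.card ≤ x + y ∧ ∀ R, IsRect R →
      ((∀ p ∈ P, p ∈ R → p ∈ A) ∨ (∀ p ∈ P, p ∈ R → p ∈ B)) →
      recBound x y * P.card < ((R ∩ ↑P).ncard : ℝ) → ∃ q ∈ Q, q ∈ R := by
  rcases le_total B.card A.card with h | h
  · exact hit_split_aux x y P A B hA hB hAB h h4
  · obtain ⟨Q, h1, h2, h3⟩ := hit_split_aux x y P B A hB hA (by omega) h h4'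
    exact ⟨Q, h1, h2, fun R hR h => h3 R hR h.symm⟩

theorem bad_card (P : Finset PlaneE) (hP : 0 < P.card) (f : PlaneE → ℝ) :
    4 * (P.filter fun q => 3 * P.card < 4 * (P.filter fun p => f q < f p).card).card < P.card := by
  classical
  set Bd := P.filter fun q => 3 * P.card < 4 * (P.filter fun p => f q < f p).card with hBd
  rcases Bd.eq_empty_or_nonempty with h | h
  · simpa [h] using hP
  obtain ⟨m, hm, hmax⟩ := Bd.exists_max_image f h
  have hm2 := (Finset.mem_filter.1 hm).2
  have hdis : Disjoint Bd (P.filter fun p => f m < f p) := by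
    rw [Finset.disjoint_left]
    intro q hq hq2
    exact absurd (Finset.mem_filter.1 hq2).2 (not_lt.2 (hmax q hq))
  have hsub : Bd ∪ (P.filter fun p => f m < f p) ⊆ P :=
    Finset.union_subset (Finset.filter_subset _ _) (Finset.filter_subset _ _)
  have := Finset.card_le_card hsub
  rw [Finset.card_union_of_disjoint hdis] at this
  omega

theorem exists_center (P : Finset PlaneE) (hP : 0 < P.card) :
    ∃ q ∈ P, 4 * (P.filter fun p => q 0 < p 0).card ≤ 3 * P.card ∧
      4 * (P.filter fun p => p 0 < q 0).card ≤ 3 * P.card ∧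
      4 * (P.filter fun p => q 1 < p 1).card ≤ 3 * P.card ∧
      4 * (P.filter fun p => p 1 < q 1).card ≤ 3 * P.card := by
  classical
  have b1 := bad_card P hP (fun p => p 0)
  have b2 := bad_card P hP (fun p => - p 0)
  have b3 := bad_card P hP (fun p => p 1)
  have b4 := bad_card P hP (fun p => - p 1)
  simp only [neg_lt_neg_iff] at b2 b4
  by_contra hcon
  push Not at hcon
  have hsub : P ⊆ ((P.filter fun q => 3 * P.card < 4 * (P.filter fun p => q 0 < p 0).card) ∪
      (P.filter fun q => 3 * P.card < 4 * (P.filter fun p => p 0 < q 0).card)) ∪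
      ((P.filter fun q => 3 * P.card < 4 * (P.filter fun p => q 1 < p 1).card) ∪
      (P.filter fun q => 3 * P.card < 4 * (P.filter fun p => p 1 < q 1).card)) := by
    intro q hq
    have := hcon q hq
    simp only [Finset.mem_union, Finset.mem_filter, hq, true_and]
    by_contra hh
    push Not at hh
    have := this hh.1.1 hh.1.2 hh.2.1
    omega
  have c := Finset.card_le_card hsub
  have c1 := Finset.card_union_le
    ((P.filter fun q => 3 * P.card < 4 * (P.filter fun p => q 0 < p 0).card) ∪
      (P.filter fun q => 3 * P.card < 4 * (P.filter fun p => p 0 < q 0).card))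
    ((P.filter fun q => 3 * P.card < 4 * (P.filter fun p => q 1 < p 1).card) ∪
      (P.filter fun q => 3 * P.card < 4 * (P.filter fun p => p 1 < q 1).card))
  have c2 := Finset.card_union_le
    (P.filter fun q => 3 * P.card < 4 * (P.filter fun p => q 0 < p 0).card)
    (P.filter fun q => 3 * P.card < 4 * (P.filter fun p => p 0 < q 0).card)
  have c3 := Finset.card_union_le
    (P.filter fun q => 3 * P.card < 4 * (P.filter fun p => q 1 < p 1).card)
    (P.filter fun q => 3 * P.card < 4 * (P.filter fun p => p 1 < q 1).card)
  omega

theorem sides_card (P : Finset PlaneE) (q : PlaneE) (i : Fin 2) :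
    (P.filter fun p => q i < p i).card + (P.filter fun p => p i < q i).card ≤ P.card := by
  classical
  rw [← Finset.card_union_of_disjoint]
  · exact Finset.card_le_card
      (Finset.union_subset (Finset.filter_subset _ _) (Finset.filter_subset _ _))
  · rw [Finset.disjoint_left]
    intro p h1 h2
    exact lt_asymm (Finset.mem_filter.1 h1).2 (Finset.mem_filter.1 h2).2

/-- Recursive upper bound:
`ε_{2(x+y)+1}^R ≤ max((3/4)ε_x^R, ε_y^R ε_z^R/(ε_y^R + ε_z^R))` with `z = ⌊(x+y)/2⌋`. -/
theorem epsR_recursive_one_point (x y : ℕ) (hxy : y ≤ x) :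
    epsR (2 * (x + y) + 1) ≤
      max ((3 / 4) * epsR x)
        ((epsR y * epsR ((x + y) / 2)) / (epsR y + epsR ((x + y) / 2))) := by
  classical
  change _ ≤ recBound x y
  have hx := epsR_nonneg x
  have hy := epsR_nonneg y
  have hz := epsR_nonneg ((x + y) / 2)
  have hx1 := epsR_le_one x
  have hz1 := epsR_le_one ((x + y) / 2)
  refine csInf_le (epsR_bdd _) ⟨⟨?_, ?_⟩, fun P => ?_⟩
  · exact le_max_of_le_left (by positivity)
  · refine max_le (by linarith) (div_le_one_of_le₀ ?_ (by linarith))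
    nlinarith
  rcases Nat.eq_zero_or_pos P.card with h0 | hpos
  · rw [Finset.card_eq_zero] at h0
    subst h0
    exact ⟨∅, by simp, by simp, fun R _ h => by simp at h⟩
  obtain ⟨q, hq, q1, q2, q3, q4⟩ := exists_center P hpos
  obtain ⟨Q1, s1, c1, n1⟩ := hit_split x y P _ _ (Finset.filter_subset _ _)
    (Finset.filter_subset _ _) (sides_card P q 0) q1 q2
  obtain ⟨Q2, s2, c2, n2⟩ := hit_split x y P _ _ (Finset.filter_subset _ _)
    (Finset.filter_subset _ _) (sides_card P q 1) q3 q4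
  refine ⟨insert q (Q1 ∪ Q2), ?_, ?_, fun R hR h => ?_⟩
  · have a1 := Finset.card_insert_le q (Q1 ∪ Q2)
    have a2 := Finset.card_union_le Q1 Q2
    omega
  · exact Finset.insert_subset hq (Finset.union_subset s1 s2)
  by_cases hqR : q ∈ R
  · exact ⟨q, by simp, hqR⟩
  have hcase : ((∀ p ∈ P, p ∈ R → p ∈ P.filter fun p => q 0 < p 0) ∨
      (∀ p ∈ P, p ∈ R → p ∈ P.filter fun p => p 0 < q 0)) ∨
      ((∀ p ∈ P, p ∈ R → p ∈ P.filter fun p => q 1 < p 1) ∨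
      (∀ p ∈ P, p ∈ R → p ∈ P.filter fun p => p 1 < q 1)) := by
    obtain ⟨a, b, c, d, rfl⟩ := hR
    simp only [Set.mem_setOf_eq] at hqR ⊢
    by_cases ha : a ≤ q 0
    · by_cases hb : q 0 ≤ b
      · by_cases hc : c ≤ q 1
        · have hd : ¬ q 1 ≤ d := fun hd => hqR ⟨ha, hb, hc, hd⟩
          exact Or.inr (Or.inr fun p hp h => Finset.mem_filter.2 ⟨hp, by linarith [h.2.2.2]⟩)
        · exact Or.inr (Or.inl fun p hp h => Finset.mem_filter.2 ⟨hp, by linarith [h.2.2.1]⟩)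
      · exact Or.inl (Or.inr fun p hp h => Finset.mem_filter.2 ⟨hp, by linarith [h.2.1]⟩)
    · exact Or.inl (Or.inl fun p hp h => Finset.mem_filter.2 ⟨hp, by linarith [h.1]⟩)
  rcases hcase with hcase | hcase
  · obtain ⟨r, hr, hrR⟩ := n1 R hR hcase h
    exact ⟨r, by simp [hr], hrR⟩
  · obtain ⟨r, hr, hrR⟩ := n2 R hR hcase h
    exact ⟨r, by simp [hr], hrR⟩
end

section
/- For every finite set P of n points in ℝ², there exists a subset Q ⊆ P with |Q| ≤ 3 such that every axis-parallel rectangle R with |R ∩ P| > (9/16)·n contains a point of Q. In other words, every finite planar point set admits a strong (9/16)-net of size 3 with respect to axis-parallel rectangles. -/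
abbrev E2 := EuclideanSpace ℝ (Fin 2)

/-- The four signed coordinate functionals. -/
noncomputable def sgnCoord (k : Fin 2 × Bool) (z : E2) : ℝ := if k.2 then z k.1 else - z k.1

open Classical in
/-- Points of `P` at least as far as `c` in direction `k`. -/
noncomputable def farSide (P : Finset E2) (k : Fin 2 × Bool) (c : E2) : Finset E2 :=
  P.filter (fun z => sgnCoord k c ≤ sgnCoord k z)

theorem farSide_subset (P : Finset E2) (k : Fin 2 × Bool) (c : E2) : farSide P k c ⊆ P :=
  Finset.filter_subset _ _

open Classical in
theorem bad_card_s6 (P : Finset E2) (hP : P.Nonempty) (k : Fin 2 × Bool) :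
    4 * (P.filter (fun c => 4 * (farSide P k c).card < P.card)).card < P.card := by
  rcases (P.filter (fun c => 4 * (farSide P k c).card < P.card)).eq_empty_or_nonempty with h | h
  · rw [h]; simpa using hP.card_pos
  · obtain ⟨p, hp, hmin⟩ := Finset.exists_min_image _ (sgnCoord k) h
    have h1 : (P.filter (fun c => 4 * (farSide P k c).card < P.card)) ⊆ farSide P k p := by
      intro z hz
      exact Finset.mem_filter.2 ⟨(Finset.mem_filter.1 hz).1, hmin z hz⟩
    have h2 := Finset.card_le_card h1
    have h3 := (Finset.mem_filter.1 hp).2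
    omega

open Classical in
theorem exists_center_s6 (P : Finset E2) (hP : P.Nonempty) :
    ∃ c ∈ P, ∀ k, P.card ≤ 4 * (farSide P k c).card := by
  by_contra! hcon
  have hsub : P ⊆ Finset.univ.biUnion
      (fun k => P.filter (fun c => 4 * (farSide P k c).card < P.card)) := by
    intro c hc
    obtain ⟨k, hk⟩ := hcon c hc
    exact Finset.mem_biUnion.2 ⟨k, Finset.mem_univ _, Finset.mem_filter.2 ⟨hc, hk⟩⟩
  have h1 := (Finset.card_le_card hsub).trans Finset.card_biUnion_le
  have h2 : ∑ k : Fin 2 × Bool, 4 * (P.filter (fun c => 4 * (farSide P k c).card < P.card)).card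
      < ∑ k : Fin 2 × Bool, P.card :=
    Finset.sum_lt_sum_of_nonempty Finset.univ_nonempty (fun k _ => bad_card_s6 P hP k)
  rw [← Finset.mul_sum] at h2
  simp at h2
  omega

theorem rect_miss (R : Set E2) (hR : IsRect R) (p : E2) (hp : p ∉ R) :
    ∃ k, ∀ z ∈ R, sgnCoord k z < sgnCoord k p := by
  obtain ⟨a, b, c, d, rfl⟩ := hR
  by_contra! h
  apply hp
  obtain ⟨z1, h1, h1'⟩ := h (0, true)
  obtain ⟨z2, h2, h2'⟩ := h (0, false)
  obtain ⟨z3, h3, h3'⟩ := h (1, true)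
  obtain ⟨z4, h4, h4'⟩ := h (1, false)
  simp [sgnCoord] at *
  refine ⟨?_, ?_, ?_, ?_⟩ <;> linarith

open Classical in
/-- Second stage: a centerpoint of what remains beyond a side of `c`. -/
theorem second_stage (P : Finset E2) (k : Fin 2 × Bool) (c : E2)
    (hk : P.card ≤ 4 * (farSide P k c).card) :
    ∃ Q ⊆ P, Q.card ≤ 1 ∧ ∀ R, IsRect R → (∀ z ∈ R, sgnCoord k z < sgnCoord k c) →
      (∀ q ∈ Q, q ∉ R) → 16 * (P.filter (fun z => z ∈ R)).card ≤ 9 * P.card := by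
  have hsub : farSide P k c ⊆ P := Finset.filter_subset _ _
  have hcard := Finset.card_sdiff_add_card_eq_card hsub
  have hRsub : ∀ R : Set E2, (∀ z ∈ R, sgnCoord k z < sgnCoord k c) →
      P.filter (fun z => z ∈ R) ⊆ P \ farSide P k c := by
    intro R hR z hz
    rw [Finset.mem_filter] at hz
    refine Finset.mem_sdiff.2 ⟨hz.1, fun h => ?_⟩
    exact absurd (Finset.mem_filter.1 h).2 (not_le.2 (hR z hz.2))
  rcases (P \ farSide P k c).eq_empty_or_nonempty with h | h
  · refine ⟨∅, by simp, by simp, fun R _ hR _ => ?_⟩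
    have h1 : P.filter (fun z => z ∈ R) ⊆ ∅ := fun z hz => h ▸ hRsub R hR hz
    rw [Finset.subset_empty.1 h1]
    simp
  · obtain ⟨q, hq, hqc⟩ := exists_center_s6 _ h
    refine ⟨{q}, by simpa using (Finset.mem_sdiff.1 hq).1, by simp, fun R hRect hR hqR => ?_⟩
    obtain ⟨j, hj⟩ := rect_miss R hRect q (hqR q (by simp))
    have h1 : P.filter (fun z => z ∈ R) ⊆
        (P \ farSide P k c) \ farSide (P \ farSide P k c) j q := by
      intro z hz
      refine Finset.mem_sdiff.2 ⟨hRsub R hR hz, fun h => ?_⟩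
      exact absurd (Finset.mem_filter.1 h).2 (not_le.2 (hj z (Finset.mem_filter.1 hz).2))
    have h2 := Finset.card_le_card h1
    have h3 := Finset.card_sdiff_add_card_eq_card
      (farSide_subset (P \ farSide P k c) j q)
    have h4 := hqc j
    omega

open Classical in
/-- For each axis, at most one extra point handles both directions. -/
theorem axis_stage (P : Finset E2) (i : Fin 2) (c : E2)
    (hc : ∀ k, P.card ≤ 4 * (farSide P k c).card) :
    ∃ Q ⊆ P, Q.card ≤ 1 ∧ ∀ R, IsRect R →
      (∃ b, ∀ z ∈ R, sgnCoord (i, b) z < sgnCoord (i, b) c) →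
      (∀ q ∈ Q, q ∉ R) → 16 * (P.filter (fun z => z ∈ R)).card ≤ 9 * P.card := by
  have hun : P ⊆ farSide P (i, true) c ∪ farSide P (i, false) c := by
    intro z hz
    rcases le_total (c i) (z i) with h | h
    · exact Finset.mem_union_left _ (Finset.mem_filter.2 ⟨hz, by simpa [sgnCoord] using h⟩)
    · exact Finset.mem_union_right _ (Finset.mem_filter.2 ⟨hz, by simpa [sgnCoord] using h⟩)
  have hu := (Finset.card_le_card hun).trans (Finset.card_union_le _ _)
  have hbig : ∃ b, P.card ≤ 2 * (farSide P (i, b) c).card := by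
    by_contra! h
    have := h true
    have := h false
    omega
  obtain ⟨b, hb⟩ := hbig
  obtain ⟨Q, hQ, hQ1, hQR⟩ := second_stage P (i, !b) c (hc _)
  refine ⟨Q, hQ, hQ1, fun R hR ⟨b', hb'⟩ hq => ?_⟩
  by_cases hbb : b' = !b
  · subst hbb
    exact hQR R hR hb' hq
  · have hbb' : b' = b := by cases b <;> cases b' <;> simp_all
    subst hbb'
    have h1 : P.filter (fun z => z ∈ R) ⊆ P \ farSide P (i, b') c := by
      intro z hz
      rw [Finset.mem_filter] at hz
      refine Finset.mem_sdiff.2 ⟨hz.1, fun h => ?_⟩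
      exact absurd (Finset.mem_filter.1 h).2 (not_le.2 (hb' z hz.2))
    have h2 := Finset.card_le_card h1
    have h3 := Finset.card_sdiff_add_card_eq_card
      (farSide_subset P (i, b') c)
    omega

/-- Every finite planar point set admits a strong (9/16)-net of size 3 with respect to
axis-parallel rectangles. -/
theorem strong_nine_sixteenths_net_size_three (P : Finset (EuclideanSpace ℝ (Fin 2))) :
    ∃ Q : Finset (EuclideanSpace ℝ (Fin 2)), Q ⊆ P ∧ Q.card ≤ 3 ∧
      ∀ R : Set (EuclideanSpace ℝ (Fin 2)), IsRect R →
        (9 / 16 : ℝ) * P.card < ((R ∩ ↑P).ncard : ℝ) → ∃ q ∈ Q, q ∈ R := by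
  classical
  rcases P.eq_empty_or_nonempty with rfl | hP
  · exact ⟨∅, by simp, by simp, fun R _ h => by simp at h⟩
  obtain ⟨c, hcP, hc⟩ := exists_center_s6 P hP
  obtain ⟨Q0, hQ0, hc0, h0⟩ := axis_stage P 0 c hc
  obtain ⟨Q1, hQ1, hc1, h1⟩ := axis_stage P 1 c hc
  refine ⟨{c} ∪ (Q0 ∪ Q1), ?_, ?_, ?_⟩
  · exact Finset.union_subset (by simpa using hcP) (Finset.union_subset hQ0 hQ1)
  · have a1 := Finset.card_union_le {c} (Q0 ∪ Q1)
    have a2 := Finset.card_union_le Q0 Q1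
    simp only [Finset.card_singleton] at a1
    omega
  · intro R hR hlt
    by_contra! hno
    have hset : R ∩ (↑P : Set E2) = ↑(P.filter (fun z => z ∈ R)) := by
      ext z; simp [and_comm]
    rw [hset, Set.ncard_coe_finset] at hlt
    have key : 16 * (P.filter (fun z => z ∈ R)).card ≤ 9 * P.card := by
      obtain ⟨⟨i, b⟩, hib⟩ := rect_miss R hR c (hno c (by simp))
      have hi : i = 0 ∨ i = 1 := by omega
      rcases hi with rfl | rfl
      · convert h0 R hR ⟨b, hib⟩ (fun q hq => hno q (by simp [hq]))
      · convert h1 R hR ⟨b, hib⟩ (fun q hq => hno q (by simp [hq]))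
    have key' : (16 : ℝ) * (P.filter (fun z => z ∈ R)).card ≤ 9 * P.card := by
      exact_mod_cast key
    linarith
end

section
/- For every integer i ≥ 2 and every finite set P of n points in ℝ², there exists a subset Q ⊆ P with |Q| ≤ i such that every closed halfplane H with |H ∩ P| > (2/(i+1))·n contains a point of Q. In other words, every finite planar point set admits a strong (2/(i+1))-net of size i with respect to halfplanes. -/
/-- A closed halfplane in ℝ²: `{x | a₁ x₀ + a₂ x₁ ≤ b}` with `(a₁, a₂) ≠ (0, 0)`. -/
def IsHalfplane (H : Set (EuclideanSpace ℝ (Fin 2))) : Prop :=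
  ∃ a₁ a₂ b : ℝ, (a₁ ≠ 0 ∨ a₂ ≠ 0) ∧ H = {x | a₁ * x 0 + a₂ * x 1 ≤ b}

lemma dual_coords (f : E2 →ₗ[ℝ] ℝ) :
    ∃ a b : ℝ, (∀ x, f x = a * x 0 + b * x 1) ∧ (f ≠ 0 → (a ≠ 0 ∨ b ≠ 0)) := by
  have key : ∀ x : E2, f x = f !₂[1,0] * x 0 + f !₂[0,1] * x 1 := by
    intro x
    have hx : x = x 0 • !₂[1,0] + x 1 • !₂[0,1] := by
      ext i; fin_cases i <;> simp
    conv_lhs => rw [hx]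
    rw [map_add, map_smul, map_smul]
    simp [mul_comm]
  refine ⟨_, _, key, ?_⟩
  intro hf
  by_contra h
  push Not at h
  apply hf
  ext x
  rw [key, h.1, h.2]; simp

lemma support (S : Set E2) (x : E2) (hx : x ∈ convexHull ℝ S)
    (hxi : x ∉ interior (convexHull ℝ S)) :
    ∃ u v : ℝ, (u ≠ 0 ∨ v ≠ 0) ∧ ∀ y ∈ S, 0 ≤ u * (y 0 - x 0) + v * (y 1 - x 1) := by
  by_cases hne : (interior (convexHull ℝ S)).Nonempty
  · obtain ⟨f, hf0, hf⟩ := geometric_hahn_banach_of_nonempty_interior_point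
      (convex_convexHull ℝ S) hxi hne
    obtain ⟨a, b, hab, h0⟩ := dual_coords (f : E2 →ₗ[ℝ] ℝ)
    have hne0 : (f : E2 →ₗ[ℝ] ℝ) ≠ 0 := by
      intro h
      exact hf0 (by ext y; exact congrArg (fun g : E2 →ₗ[ℝ] ℝ => g y) h)
    refine ⟨-a, -b, by simpa using h0 hne0, fun y hy => ?_⟩
    have h1 := hf y (subset_convexHull ℝ S hy)
    have h2 := hab y
    have h3 := hab x
    simp only [ContinuousLinearMap.coe_coe] at h2 h3
    linarith
  · rw [interior_convexHull_nonempty_iff_affineSpan_eq_top] at hne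
    have hxs : x ∈ affineSpan ℝ S := convexHull_subset_affineSpan S hx
    have hlt : (affineSpan ℝ S).direction < ⊤ := by
      rw [lt_top_iff_ne_top]
      intro h
      exact hne ((AffineSubspace.direction_eq_top_iff_of_nonempty ⟨x, hxs⟩).1 h)
    obtain ⟨f, hf0, hf⟩ := Submodule.exists_le_ker_of_lt_top _ hlt
    obtain ⟨a, b, hab, h0⟩ := dual_coords f
    refine ⟨a, b, h0 hf0, fun y hy => ?_⟩
    have h1 : f (y - x) = 0 :=
      hf (AffineSubspace.vsub_mem_direction (subset_affineSpan ℝ S hy) hxs)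
    rw [hab] at h1
    simpa using h1.ge

lemma face_pt (S : Finset E2) (x : E2) (hx : x ∈ convexHull ℝ (S : Set E2)) (u v : ℝ)
    (h : ∀ y ∈ S, 0 ≤ u * (y 0 - x 0) + v * (y 1 - x 1)) (s t : ℝ) :
    ∃ y ∈ S, u * (y 0 - x 0) + v * (y 1 - x 1) = 0 ∧ s * (y 0 - x 0) + t * (y 1 - x 1) ≤ 0 := by
  obtain ⟨w, hw0, hw1, hwx⟩ := Finset.mem_convexHull'.1 hx
  have hc : ∀ i : Fin 2, ∑ y ∈ S, w y * (y i - x i) = 0 := by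
    intro i
    have := congrArg (fun z : E2 => z i) hwx
    simp at this
    simp only [mul_sub, Finset.sum_sub_distrib, ← Finset.sum_mul, hw1, this]
    ring
  have hl : ∀ c d : ℝ, ∑ y ∈ S, w y * (c * (y 0 - x 0) + d * (y 1 - x 1)) = 0 := by
    intro c d
    have : ∀ y ∈ S, w y * (c * (y 0 - x 0) + d * (y 1 - x 1)) =
        c * (w y * (y 0 - x 0)) + d * (w y * (y 1 - x 1)) := fun y _ => by ring
    rw [Finset.sum_congr rfl this, Finset.sum_add_distrib, ← Finset.mul_sum, ← Finset.mul_sum,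
      hc, hc]; ring
  have hz := (Finset.sum_eq_zero_iff_of_nonneg
    (fun y hy => mul_nonneg (hw0 y hy) (h y hy))).1 (hl u v)
  by_contra hcon
  push Not at hcon
  have hz2 := (Finset.sum_eq_zero_iff_of_nonneg (s := S)
    (f := fun y => w y * (s * (y 0 - x 0) + t * (y 1 - x 1))) (fun y hy => by
      rcases (hw0 y hy).eq_or_lt with h0 | h0
      · simp [← h0]
      · have := (mul_eq_zero.1 (hz y hy)).resolve_left h0.ne'
        exact mul_nonneg h0.le (hcon y hy this).le)).1 (hl s t)
  have : ∀ y ∈ S, w y = 0 := by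
    intro y hy
    by_contra h0
    have h1 := (mul_eq_zero.1 (hz y hy)).resolve_left h0
    have h2 := (mul_eq_zero.1 (hz2 y hy)).resolve_left h0
    exact (hcon y hy h1).ne' h2
  rw [Finset.sum_eq_zero this] at hw1
  norm_num at hw1

lemma two_net (P : Finset E2) (hP : P.Nonempty) : ∃ a ∈ P, ∃ b ∈ P,
    ∀ T ⊆ P, 2 * P.card < 3 * T.card → ∀ c₁ c₂ d : ℝ,
      (∀ y ∈ T, c₁ * y 0 + c₂ * y 1 ≤ d) → c₁ * a 0 + c₂ * a 1 ≤ d ∨ c₁ * b 0 + c₂ * b 1 ≤ d := by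
  classical
  set s : Finset (Finset E2) := P.powerset.filter (fun T => 2 * P.card < 3 * T.card) with hs
  have hpos := hP.card_pos
  have hC : (⋂ T ∈ s, convexHull ℝ ((T : Finset E2) : Set E2)).Nonempty := by
    apply Convex.helly_theorem' (𝕜 := ℝ)
    · intro T _; exact convex_convexHull ℝ _
    · intro I hI hcard
      have hcard : I.card ≤ 3 := by simpa using hcard
      have h1 : (I.biUnion (fun T => P \ T)).card ≤ I.card * ((P.card - 1) / 3) := by
        apply Finset.card_biUnion_le_card_mul
        intro T hT
        have := hI hT
        rw [hs, Finset.mem_filter, Finset.mem_powerset] at this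
        have h2 := Finset.card_sdiff_add_card_eq_card this.1
        omega
      have h2 : (I.biUnion (fun T => P \ T)).card < P.card := by
        have : I.card * ((P.card - 1) / 3) ≤ 3 * ((P.card - 1) / 3) := by gcongr
        omega
      obtain ⟨p, hp, hpn⟩ := Finset.exists_mem_notMem_of_card_lt_card h2
      refine ⟨p, ?_⟩
      simp only [Set.mem_iInter]
      intro T hT
      apply subset_convexHull
      by_contra hpT
      exact hpn (Finset.mem_biUnion.2 ⟨T, hT, Finset.mem_sdiff.2 ⟨hp, hpT⟩⟩)
  set C := ⋂ T ∈ s, convexHull ℝ ((T : Finset E2) : Set E2) with hCdef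
  have hPs : P ∈ s := by
    rw [hs, Finset.mem_filter, Finset.mem_powerset]; exact ⟨subset_rfl, by omega⟩
  have hclosed : IsClosed C := by
    apply isClosed_biInter
    intro T _
    exact T.finite_toSet.isClosed_convexHull ℝ
  have hfr : ∃ x ∈ C, x ∉ interior C := by
    by_contra hcon
    push Not at hcon
    have hop : IsOpen C := by
      rw [← interior_eq_iff_isOpen]; exact interior_subset.antisymm hcon
    have huniv : C = Set.univ := IsClopen.eq_univ ⟨hclosed, hop⟩ hC
    have hcomp : IsCompact C := (P.finite_toSet.isCompact_convexHull ℝ).of_isClosed_subset hclosed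
      (Set.biInter_subset_of_mem hPs)
    rw [huniv] at hcomp
    exact noncompact_univ E2 hcomp
  obtain ⟨x, hxC, hxi⟩ := hfr
  have hxT : ∀ T ∈ s, x ∈ convexHull ℝ ((T : Finset E2) : Set E2) := by
    simpa [hCdef] using hxC
  have hS : ∃ S ∈ s, x ∉ interior (convexHull ℝ ((S : Finset E2) : Set E2)) := by
    by_contra hcon
    push Not at hcon
    apply hxi
    rw [hCdef, Finset.interior_iInter]
    simpa using hcon
  obtain ⟨S, hSs, hxS⟩ := hS
  obtain ⟨u, v, huv, hsup⟩ := support S x (hxT S hSs) hxS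
  have hSP : S ⊆ P := Finset.mem_powerset.1 (Finset.mem_filter.1 hSs).1
  obtain ⟨a, ha, ha0, ha1⟩ := face_pt S x (hxT S hSs) u v hsup (-v) u
  obtain ⟨b, hb, hb0, hb1⟩ := face_pt S x (hxT S hSs) u v hsup v (-u)
  refine ⟨a, hSP ha, b, hSP hb, ?_⟩
  intro T hTP hT c₁ c₂ d hd
  have hTs : T ∈ s := by rw [hs, Finset.mem_filter, Finset.mem_powerset]; exact ⟨hTP, hT⟩
  have hxd : c₁ * x 0 + c₂ * x 1 ≤ d := by
    obtain ⟨y, hy, -, h⟩ := face_pt T x (hxT T hTs) 0 0 (by simp) (-c₁) (-c₂)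
    have := hd y hy
    linarith
  have hpos : 0 < u ^ 2 + v ^ 2 := by
    rcases huv with h | h <;> positivity
  have e : ∀ z : E2, u * (z 0 - x 0) + v * (z 1 - x 1) = 0 →
      (u ^ 2 + v ^ 2) * (c₁ * (z 0 - x 0) + c₂ * (z 1 - x 1)) =
      (-v * c₁ + u * c₂) * (-v * (z 0 - x 0) + u * (z 1 - x 1)) := by
    intro z hz
    linear_combination (u * c₁ + v * c₂) * hz
  have fin : ∀ z : E2, (u ^ 2 + v ^ 2) * (c₁ * (z 0 - x 0) + c₂ * (z 1 - x 1)) ≤ 0 →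
      c₁ * z 0 + c₂ * z 1 ≤ d := by
    intro z hz
    have := nonpos_of_mul_nonpos_right hz hpos
    linarith
  rcases le_total 0 (-v * c₁ + u * c₂) with h | h
  · left; apply fin; rw [e a ha0]
    exact mul_nonpos_of_nonneg_of_nonpos h ha1
  · right; apply fin; rw [e b hb0]
    exact mul_nonpos_of_nonpos_of_nonneg h (by linarith)

def ev (f : ℝ × ℝ × ℝ) (x : E2) : ℝ := f.1 * x 0 + f.2.1 * x 1 + f.2.2

lemma dep (x₁ x₂ x₃ x₄ : E2) : ∃ w₁ w₂ w₃ w₄ : ℝ,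
    ¬ (w₁ = 0 ∧ w₂ = 0 ∧ w₃ = 0 ∧ w₄ = 0) ∧ w₁ + w₂ + w₃ + w₄ = 0 ∧
    ∀ f, w₁ * ev f x₁ + w₂ * ev f x₂ + w₃ * ev f x₃ + w₄ * ev f x₄ = 0 := by
  let M : Matrix (Fin 3) (Fin 4) ℝ :=
    !![x₁ 0, x₂ 0, x₃ 0, x₄ 0; x₁ 1, x₂ 1, x₃ 1, x₄ 1; 1, 1, 1, 1]
  have hk : LinearMap.ker M.mulVecLin ≠ ⊥ := LinearMap.ker_ne_bot_of_finrank_lt (by simp)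
  obtain ⟨w, hw, hw0⟩ := Submodule.exists_mem_ne_zero_of_ne_bot hk
  rw [LinearMap.mem_ker, Matrix.mulVecLin_apply] at hw
  have h0 := congrFun hw 0
  have h1 := congrFun hw 1
  have h2 := congrFun hw 2
  simp [M, Matrix.mulVec, dotProduct, Fin.sum_univ_four] at h0 h1 h2
  refine ⟨w 0, w 1, w 2, w 3, ?_, h2, ?_⟩
  · rintro ⟨a, b, c, d⟩
    apply hw0
    ext i; fin_cases i <;> assumption
  · intro f
    simp only [ev]
    linear_combination f.1 * h0 + f.2.1 * h1 + f.2.2 * h2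

lemma ext_sep (P : Finset E2) (q : E2)
    (hq : q ∈ (convexHull ℝ (P : Set E2)).extremePoints ℝ) :
    ∃ g, ev g q < 0 ∧ ∀ y ∈ P, y ≠ q → 0 < ev g y := by
  classical
  rw [(convex_convexHull ℝ _).mem_extremePoints_iff_mem_sdiff_convexHull_sdiff] at hq
  have hq2 : q ∉ convexHull ℝ ((P.erase q : Finset E2) : Set E2) := by
    intro h
    apply hq.2
    refine convexHull_mono ?_ h
    intro y hy
    have hy' := Finset.mem_erase.1 (Finset.mem_coe.1 hy)
    exact ⟨subset_convexHull ℝ _ hy'.2, hy'.1⟩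
  obtain ⟨f, u, h1, h2⟩ := geometric_hahn_banach_point_closed (convex_convexHull ℝ _)
    ((P.erase q).finite_toSet.isClosed_convexHull ℝ) hq2
  obtain ⟨a, b, hab, -⟩ := dual_coords (f : E2 →ₗ[ℝ] ℝ)
  simp only [ContinuousLinearMap.coe_coe] at hab
  refine ⟨(a, b, -u), ?_, ?_⟩
  · simp only [ev]; have := hab q; linarith
  · intro y hy hyq
    have := h2 y (subset_convexHull ℝ _ (by simp [hy, hyq]))
    have := hab y
    simp only [ev]; linarith

/-- a positive combination cannot vanish -/
lemma no_one {w₁ w₂ w₃ w₄ a b c d : ℝ} (hs : w₁ + w₂ + w₃ + w₄ = 0)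
    (hn : ¬ (w₁ = 0 ∧ w₂ = 0 ∧ w₃ = 0 ∧ w₄ = 0))
    (h : w₁ * a + w₂ * b + w₃ * c + w₄ * d = 0)
    (h1 : w₁ ≤ 0) (h2 : 0 ≤ w₂) (h3 : 0 ≤ w₃) (h4 : 0 ≤ w₄)
    (ha : a < 0) (hb : 0 < b) (hc : 0 < c) (hd : 0 < d) : False := by
  have e1 := mul_nonneg_of_nonpos_of_nonpos h1 ha.le
  have e2 := mul_nonneg h2 hb.le
  have e3 := mul_nonneg h3 hc.le
  have e4 := mul_nonneg h4 hd.le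
  have z1 : w₁ * a = 0 := by linarith
  have z2 : w₂ * b = 0 := by linarith
  have z3 : w₃ * c = 0 := by linarith
  have z4 : w₄ * d = 0 := by linarith
  exact hn ⟨(mul_eq_zero.1 z1).resolve_right ha.ne, (mul_eq_zero.1 z2).resolve_right hb.ne',
    (mul_eq_zero.1 z3).resolve_right hc.ne', (mul_eq_zero.1 z4).resolve_right hd.ne'⟩

lemma no_two {w₁ w₂ w₃ w₄ a b c d : ℝ} (hs : w₁ + w₂ + w₃ + w₄ = 0)
    (hn : ¬ (w₁ = 0 ∧ w₂ = 0 ∧ w₃ = 0 ∧ w₄ = 0))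
    (h : w₁ * a + w₂ * b + w₃ * c + w₄ * d = 0)
    (h1 : 0 ≤ w₁) (h2 : 0 ≤ w₂) (h3 : w₃ ≤ 0) (h4 : w₄ ≤ 0)
    (ha : a ≤ 0) (hb : b ≤ 0) (hc : 0 < c) (hd : 0 < d) : False := by
  have e1 := mul_nonpos_of_nonneg_of_nonpos h1 ha
  have e2 := mul_nonpos_of_nonneg_of_nonpos h2 hb
  have e3 := mul_nonpos_of_nonpos_of_nonneg h3 hc.le
  have e4 := mul_nonpos_of_nonpos_of_nonneg h4 hd.le
  have z3 : w₃ * c = 0 := by linarith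
  have z4 : w₄ * d = 0 := by linarith
  have y3 := (mul_eq_zero.1 z3).resolve_right hc.ne'
  have y4 := (mul_eq_zero.1 z4).resolve_right hd.ne'
  exact hn ⟨by linarith, by linarith, y3, y4⟩

/-- Configuration: `f₁` is nonpositive on `p, q₁` and positive on the other `q`s, etc. -/
lemma tri {p q₁ q₂ q₃ : E2} {f₁ f₂ f₃ g₁ g₂ g₃ : ℝ × ℝ × ℝ}
    (f1p : ev f₁ p ≤ 0) (f2p : ev f₂ p ≤ 0) (f3p : ev f₃ p ≤ 0)
    (f11 : ev f₁ q₁ ≤ 0) (f22 : ev f₂ q₂ ≤ 0) (f33 : ev f₃ q₃ ≤ 0)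
    (f12 : 0 < ev f₁ q₂) (f13 : 0 < ev f₁ q₃) (f21 : 0 < ev f₂ q₁) (f23 : 0 < ev f₂ q₃)
    (f31 : 0 < ev f₃ q₁) (f32 : 0 < ev f₃ q₂)
    (g1p : 0 < ev g₁ p) (g11 : ev g₁ q₁ < 0) (g12 : 0 < ev g₁ q₂) (g13 : 0 < ev g₁ q₃)
    (g2p : 0 < ev g₂ p) (g21 : 0 < ev g₂ q₁) (g22 : ev g₂ q₂ < 0) (g23 : 0 < ev g₂ q₃)
    (g3p : 0 < ev g₃ p) (g31 : 0 < ev g₃ q₁) (g32 : 0 < ev g₃ q₂) (g33 : ev g₃ q₃ < 0) :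
    ∃ l₁ l₂ l₃ : ℝ, 0 ≤ l₁ ∧ 0 ≤ l₂ ∧ 0 ≤ l₃ ∧ 0 < l₁ + l₂ + l₃ ∧
      ∀ f, (l₁ + l₂ + l₃) * ev f p = l₁ * ev f q₁ + l₂ * ev f q₂ + l₃ * ev f q₃ := by
  have main : ∀ w₀ w₁ w₂ w₃ : ℝ, ¬ (w₀ = 0 ∧ w₁ = 0 ∧ w₂ = 0 ∧ w₃ = 0) →
      w₀ + w₁ + w₂ + w₃ = 0 →
      (∀ f, w₀ * ev f p + w₁ * ev f q₁ + w₂ * ev f q₂ + w₃ * ev f q₃ = 0) → 0 ≤ w₀ →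
      w₁ ≤ 0 ∧ w₂ ≤ 0 ∧ w₃ ≤ 0 := by
    intro w₀ w₁ w₂ w₃ hn hs hw h0
    have n1 : ¬ (w₁ ≤ 0 ∧ 0 ≤ w₂ ∧ 0 ≤ w₃) := fun ⟨a, b, c⟩ =>
      no_one (w₁ := w₁) (w₂ := w₂) (w₃ := w₃) (w₄ := w₀) (by linarith) (by tauto)
        (by linarith [hw g₁]) a b c h0 g11 g12 g13 g1p
    have n2 : ¬ (w₂ ≤ 0 ∧ 0 ≤ w₁ ∧ 0 ≤ w₃) := fun ⟨a, b, c⟩ =>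
      no_one (w₁ := w₂) (w₂ := w₁) (w₃ := w₃) (w₄ := w₀) (by linarith) (by tauto)
        (by linarith [hw g₂]) a b c h0 g22 g21 g23 g2p
    have n3 : ¬ (w₃ ≤ 0 ∧ 0 ≤ w₁ ∧ 0 ≤ w₂) := fun ⟨a, b, c⟩ =>
      no_one (w₁ := w₃) (w₂ := w₁) (w₃ := w₂) (w₄ := w₀) (by linarith) (by tauto)
        (by linarith [hw g₃]) a b c h0 g33 g31 g32 g3p
    have m1 : ¬ (0 ≤ w₁ ∧ w₂ ≤ 0 ∧ w₃ ≤ 0) := fun ⟨a, b, c⟩ =>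
      no_two (w₁ := w₀) (w₂ := w₁) (w₃ := w₂) (w₄ := w₃) (by linarith) (by tauto)
        (by linarith [hw f₁]) h0 a b c f1p f11 f12 f13
    have m2 : ¬ (0 ≤ w₂ ∧ w₁ ≤ 0 ∧ w₃ ≤ 0) := fun ⟨a, b, c⟩ =>
      no_two (w₁ := w₀) (w₂ := w₂) (w₃ := w₁) (w₄ := w₃) (by linarith) (by tauto)
        (by linarith [hw f₂]) h0 a b c f2p f22 f21 f23
    have m3 : ¬ (0 ≤ w₃ ∧ w₁ ≤ 0 ∧ w₂ ≤ 0) := fun ⟨a, b, c⟩ =>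
      no_two (w₁ := w₀) (w₂ := w₃) (w₃ := w₁) (w₄ := w₂) (by linarith) (by tauto)
        (by linarith [hw f₃]) h0 a b c f3p f33 f31 f32
    rcases le_total 0 w₁ with h1 | h1 <;> rcases le_total 0 w₂ with h2 | h2 <;>
      rcases le_total 0 w₃ with h3 | h3
    · exact absurd ⟨by linarith, by linarith, by linarith, by linarith⟩ hn
    · exact absurd ⟨h3, h1, h2⟩ n3
    · exact absurd ⟨h2, h1, h3⟩ n2
    · exact absurd ⟨h1, h2, h3⟩ m1
    · exact absurd ⟨h1, h2, h3⟩ n1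
    · exact absurd ⟨h2, h1, h3⟩ m2
    · exact absurd ⟨h3, h1, h2⟩ m3
    · exact ⟨h1, h2, h3⟩
  have fin : ∀ w₀ w₁ w₂ w₃ : ℝ, ¬ (w₀ = 0 ∧ w₁ = 0 ∧ w₂ = 0 ∧ w₃ = 0) →
      w₀ + w₁ + w₂ + w₃ = 0 →
      (∀ f, w₀ * ev f p + w₁ * ev f q₁ + w₂ * ev f q₂ + w₃ * ev f q₃ = 0) → 0 ≤ w₀ →
      ∃ l₁ l₂ l₃ : ℝ, 0 ≤ l₁ ∧ 0 ≤ l₂ ∧ 0 ≤ l₃ ∧ 0 < l₁ + l₂ + l₃ ∧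
      ∀ f, (l₁ + l₂ + l₃) * ev f p = l₁ * ev f q₁ + l₂ * ev f q₂ + l₃ * ev f q₃ := by
    intro w₀ w₁ w₂ w₃ hn hs hw h0
    obtain ⟨h1, h2, h3⟩ := main w₀ w₁ w₂ w₃ hn hs hw h0
    refine ⟨-w₁, -w₂, -w₃, by linarith, by linarith, by linarith, ?_, ?_⟩
    · by_contra hc
      exact hn ⟨by linarith, by linarith, by linarith, by linarith⟩
    · intro f
      linear_combination (ev f p) * (-hs) + hw f
  obtain ⟨w₀, w₁, w₂, w₃, hn, hs, hw⟩ := dep p q₁ q₂ q₃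
  rcases le_total 0 w₀ with h | h
  · exact fin w₀ w₁ w₂ w₃ hn hs hw h
  · refine fin (-w₀) (-w₁) (-w₂) (-w₃) (by simpa using hn) (by linarith) ?_ (by linarith)
    intro f; linear_combination -(hw f)

/-- positive combination with zero coefficient at the second place -/
lemma pos_comb {S h la lb lc wa wb wc w4 a b c d : ℝ} (hla : 0 ≤ la) (hlb : 0 ≤ lb)
    (hS : S = la + lb + lc) (hSp : 0 < S)
    (hh : S * h = la * a + lb * b + lc * c) (hs : wa + wb + wc + w4 = 0)
    (hw : wa * a + wb * b + wc * c + w4 * d = 0)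
    (hwa : 0 ≤ wa) (hw4 : 0 ≤ w4) (hwb : wb < 0) (hcase : lb * (-wc) ≤ lc * (-wb))
    (hp : h ≤ 0) (ha : 0 < a) (hc : 0 < c) (hd : 0 < d) : False := by
  have key : (-wb) * S * h = (-wb * la + lb * wa) * a + (-wb * lc + lb * wc) * c
      + (lb * w4) * d := by
    linear_combination (-wb) * hh - lb * hw
  have ca : 0 ≤ -wb * la + lb * wa :=
    add_nonneg (mul_nonneg (by linarith) hla) (mul_nonneg hlb hwa)
  have cc : 0 ≤ -wb * lc + lb * wc := by linarith
  have cd : 0 ≤ lb * w4 := mul_nonneg hlb hw4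
  have hsum : (-wb * la + lb * wa) + (-wb * lc + lb * wc) + lb * w4 = -wb * S := by
    rw [hS]; linear_combination lb * hs
  have hpos : 0 < -wb * S := mul_pos (by linarith) hSp
  have hl : -wb * S * h ≤ 0 := mul_nonpos_of_nonneg_of_nonpos hpos.le hp
  have ea := mul_nonneg ca ha.le
  have ec := mul_nonneg cc hc.le
  have ed := mul_nonneg cd hd.le
  have z1 := (mul_eq_zero.1 (show (-wb * la + lb * wa) * a = 0 by linarith)).resolve_right ha.ne'
  have z2 := (mul_eq_zero.1 (show (-wb * lc + lb * wc) * c = 0 by linarith)).resolve_right hc.ne'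
  have z3 := (mul_eq_zero.1 (show (lb * w4) * d = 0 by linarith)).resolve_right hd.ne'
  linarith

lemma quad {p qa qb qc q4 : E2} {fb fc : ℝ × ℝ × ℝ} {la lb lc wa wb wc w4 : ℝ}
    (hla : 0 ≤ la) (hlb : 0 ≤ lb) (hlc : 0 ≤ lc) (hS : 0 < la + lb + lc)
    (hl : ∀ f, (la + lb + lc) * ev f p = la * ev f qa + lb * ev f qb + lc * ev f qc)
    (hs : wa + wb + wc + w4 = 0)
    (hw : ∀ f, wa * ev f qa + wb * ev f qb + wc * ev f qc + w4 * ev f q4 = 0)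
    (hwa : 0 ≤ wa) (hw4 : 0 ≤ w4) (hwb : wb < 0) (hwc : wc < 0)
    (fbp : ev fb p ≤ 0) (fba : 0 < ev fb qa) (fbc : 0 < ev fb qc) (fb4 : 0 < ev fb q4)
    (fcp : ev fc p ≤ 0) (fca : 0 < ev fc qa) (fcb : 0 < ev fc qb) (fc4 : 0 < ev fc q4) :
    False := by
  rcases le_total (lb * (-wc)) (lc * (-wb)) with h | h
  · exact pos_comb hla hlb rfl hS (hl fb) hs (hw fb) hwa hw4 hwb h fbp fba fbc fb4
  · exact pos_comb (S := la + lb + lc) (h := ev fc p) (wb := wc) (wc := wb) (w4 := w4) (b := ev fc qc)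
      hla hlc (by ring) hS (by linarith [hl fc]) (by linarith)
      (by linarith [hw fc]) hwa hw4 hwc h fcp fca fcb fc4

lemma five {p q₁ q₂ q₃ q₄ : E2} {f₁ f₂ f₃ g₁ g₂ g₃ g₄ : ℝ × ℝ × ℝ}
    (f1p : ev f₁ p ≤ 0) (f2p : ev f₂ p ≤ 0) (f3p : ev f₃ p ≤ 0)
    (f11 : ev f₁ q₁ ≤ 0) (f22 : ev f₂ q₂ ≤ 0) (f33 : ev f₃ q₃ ≤ 0)
    (f12 : 0 < ev f₁ q₂) (f13 : 0 < ev f₁ q₃) (f14 : 0 < ev f₁ q₄)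
    (f21 : 0 < ev f₂ q₁) (f23 : 0 < ev f₂ q₃) (f24 : 0 < ev f₂ q₄)
    (f31 : 0 < ev f₃ q₁) (f32 : 0 < ev f₃ q₂) (f34 : 0 < ev f₃ q₄)
    (g1p : 0 < ev g₁ p) (g11 : ev g₁ q₁ < 0) (g12 : 0 < ev g₁ q₂) (g13 : 0 < ev g₁ q₃)
    (g14 : 0 < ev g₁ q₄)
    (g2p : 0 < ev g₂ p) (g21 : 0 < ev g₂ q₁) (g22 : ev g₂ q₂ < 0) (g23 : 0 < ev g₂ q₃)
    (g24 : 0 < ev g₂ q₄)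
    (g3p : 0 < ev g₃ p) (g31 : 0 < ev g₃ q₁) (g32 : 0 < ev g₃ q₂) (g33 : ev g₃ q₃ < 0)
    (g34 : 0 < ev g₃ q₄)
    (g41 : 0 < ev g₄ q₁) (g42 : 0 < ev g₄ q₂) (g43 : 0 < ev g₄ q₃) (g44 : ev g₄ q₄ < 0) :
    False := by
  obtain ⟨l₁, l₂, l₃, hl1, hl2, hl3, hS, hl⟩ := tri f1p f2p f3p f11 f22 f33 f12 f13 f21 f23
    f31 f32 g1p g11 g12 g13 g2p g21 g22 g23 g3p g31 g32 g33
  have main : ∀ w₁ w₂ w₃ w₄ : ℝ, ¬ (w₁ = 0 ∧ w₂ = 0 ∧ w₃ = 0 ∧ w₄ = 0) →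
      w₁ + w₂ + w₃ + w₄ = 0 →
      (∀ f, w₁ * ev f q₁ + w₂ * ev f q₂ + w₃ * ev f q₃ + w₄ * ev f q₄ = 0) → 0 ≤ w₄ →
      False := by
    intro w₁ w₂ w₃ w₄ hn hs hw h4
    have n1 : ¬ (w₁ ≤ 0 ∧ 0 ≤ w₂ ∧ 0 ≤ w₃) := fun ⟨a, b, c⟩ =>
      no_one hs hn (hw g₁) a b c h4 g11 g12 g13 g14
    have n2 : ¬ (w₂ ≤ 0 ∧ 0 ≤ w₁ ∧ 0 ≤ w₃) := fun ⟨a, b, c⟩ =>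
      no_one (w₁ := w₂) (w₂ := w₁) (w₃ := w₃) (w₄ := w₄) (by linarith) (by tauto)
        (by linarith [hw g₂]) a b c h4 g22 g21 g23 g24
    have n3 : ¬ (w₃ ≤ 0 ∧ 0 ≤ w₁ ∧ 0 ≤ w₂) := fun ⟨a, b, c⟩ =>
      no_one (w₁ := w₃) (w₂ := w₁) (w₃ := w₂) (w₄ := w₄) (by linarith) (by tauto)
        (by linarith [hw g₃]) a b c h4 g33 g31 g32 g34
    have n4 : ¬ (w₁ ≤ 0 ∧ w₂ ≤ 0 ∧ w₃ ≤ 0) := fun ⟨a, b, c⟩ =>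
      no_one (w₁ := -w₄) (w₂ := -w₁) (w₃ := -w₂) (w₄ := -w₃) (by linarith)
        (by simp only [neg_eq_zero]; tauto)
        (by linarith [hw g₄]) (by linarith) (by linarith) (by linarith) (by linarith)
        g44 g41 g42 g43
    rcases le_or_gt 0 w₁ with h1 | h1 <;> rcases le_or_gt 0 w₂ with h2 | h2 <;>
      rcases le_or_gt 0 w₃ with h3 | h3
    · exact hn ⟨by linarith, by linarith, by linarith, by linarith⟩
    · exact n3 ⟨h3.le, h1, h2⟩
    · exact n2 ⟨h2.le, h1, h3⟩
    · exact quad hl1 hl2 hl3 hS hl hs hw h1 h4 h2 h3 f2p f21 f23 f24 f3p f31 f32 f34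
    · exact n1 ⟨h1.le, h2, h3⟩
    · exact quad (la := l₂) (lb := l₁) (lc := l₃) (wa := w₂) (wb := w₁) (wc := w₃) (w4 := w₄)
        (qa := q₂) (qb := q₁) (qc := q₃) (p := p) (q4 := q₄)
        hl2 hl1 hl3 (by linarith) (fun f => by linarith [hl f]) (by linarith)
        (fun f => by linarith [hw f]) h2 h4 h1 h3 f1p f12 f13 f14 f3p f32 f31 f34
    · exact quad (la := l₃) (lb := l₁) (lc := l₂) (wa := w₃) (wb := w₁) (wc := w₂) (w4 := w₄)
        (qa := q₃) (qb := q₁) (qc := q₂) (p := p) (q4 := q₄)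
        hl3 hl1 hl2 (by linarith) (fun f => by linarith [hl f]) (by linarith)
        (fun f => by linarith [hw f]) h3 h4 h1 h2 f1p f13 f12 f14 f2p f23 f21 f24
    · exact n4 ⟨h1.le, h2.le, h3.le⟩
  obtain ⟨w₁, w₂, w₃, w₄, hn, hs, hw⟩ := dep q₁ q₂ q₃ q₄
  rcases le_total 0 w₄ with h | h
  · exact main w₁ w₂ w₃ w₄ hn hs hw h
  · refine main (-w₁) (-w₂) (-w₃) (-w₄) (by simpa using hn) (by linarith) ?_ (by linarith)
    intro f; linear_combination -(hw f)

lemma halfplane_ext (P : Finset E2) (a b c : ℝ) (p : E2) (hp : p ∈ P)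
    (hpc : a * p 0 + b * p 1 ≤ c) :
    ∃ q ∈ (convexHull ℝ (P : Set E2)).extremePoints ℝ, a * q 0 + b * q 1 ≤ c := by
  have hfin : ((convexHull ℝ (P : Set E2)).extremePoints ℝ).Finite :=
    P.finite_toSet.subset extremePoints_convexHull_subset
  have hKM := closure_convexHull_extremePoints (P.finite_toSet.isCompact_convexHull ℝ)
    (convex_convexHull ℝ _)
  rw [(hfin.isClosed_convexHull ℝ).closure_eq] at hKM
  have hpm : p ∈ convexHull ℝ (hfin.toFinset : Set E2) := by
    rw [Set.Finite.coe_toFinset, hKM]; exact subset_convexHull ℝ _ hp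
  obtain ⟨y, hy, -, h⟩ := face_pt hfin.toFinset p hpm 0 0 (by simp) a b
  exact ⟨y, hfin.mem_toFinset.1 hy, by linarith⟩

lemma big_net (i : ℕ) (hi : 3 ≤ i) (P : Finset E2) :
    ∃ Q : Finset E2, Q ⊆ P ∧ Q.card ≤ i ∧
      ∀ H : Set E2, IsHalfplane H →
        (2 / ((i : ℝ) + 1)) * P.card < ((H ∩ ↑P).ncard : ℝ) → ∃ q ∈ Q, q ∈ H := by
  classical
  let heavy : Set E2 → Prop := fun H => IsHalfplane H ∧
    (2 / ((i : ℝ) + 1)) * P.card < ((H ∩ ↑P).ncard : ℝ)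
  let X : Finset E2 := P.filter (fun q => q ∈ (convexHull ℝ (P : Set E2)).extremePoints ℝ)
  let nets : Finset (Finset E2) := X.powerset.filter (fun Q => ∀ H, heavy H → ∃ q ∈ Q, q ∈ H)
  have hX : X ∈ nets := by
    simp only [nets, Finset.mem_filter, Finset.mem_powerset]
    refine ⟨subset_rfl, ?_⟩
    rintro H ⟨⟨a, b, c, -, rfl⟩, hcard⟩
    have h0 : (0 : ℝ) < (({x : E2 | a * x 0 + b * x 1 ≤ c} ∩ ↑P).ncard : ℝ) :=
      lt_of_le_of_lt (by positivity) hcard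
    have hne := (Set.ncard_pos (P.finite_toSet.subset Set.inter_subset_right)).1
      (by exact_mod_cast h0)
    obtain ⟨p, hp1, hp2⟩ := hne
    obtain ⟨q, hq, hqc⟩ := halfplane_ext P a b c p hp2 hp1
    exact ⟨q, Finset.mem_filter.2 ⟨extremePoints_convexHull_subset hq, hq⟩, hqc⟩
  obtain ⟨Q, hQn, hmin⟩ := Finset.exists_min_image nets Finset.card ⟨X, hX⟩
  have hQX : Q ⊆ X := Finset.mem_powerset.1 (Finset.mem_filter.1 hQn).1
  have hQnet := (Finset.mem_filter.1 hQn).2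
  have hQP : Q ⊆ P := hQX.trans (Finset.filter_subset _ _)
  refine ⟨Q, hQP, ?_, fun H h1 h2 => hQnet H ⟨h1, h2⟩⟩
  by_contra hcon
  push Not at hcon
  -- private halfplanes
  have hpriv : ∀ q : E2, ∃ f : ℝ × ℝ × ℝ, q ∈ Q → (ev f q ≤ 0 ∧ (∀ r ∈ Q, r ≠ q → 0 < ev f r) ∧
      (2 / ((i : ℝ) + 1)) * P.card < ((P.filter (fun x => ev f x ≤ 0)).card : ℝ)) := by
    intro q
    by_cases hq : q ∈ Q
    swap
    · exact ⟨0, fun h => absurd h hq⟩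
    have hnot : Q.erase q ∉ nets := by
      intro h
      have := hmin _ h
      have := Finset.card_erase_lt_of_mem hq
      omega
    have : ∃ H, heavy H ∧ ∀ r ∈ Q.erase q, r ∉ H := by
      by_contra hc
      push Not at hc
      exact hnot (Finset.mem_filter.2
        ⟨Finset.mem_powerset.2 ((Finset.erase_subset _ _).trans hQX), hc⟩)
    obtain ⟨H, hH, hmiss⟩ := this
    obtain ⟨r, hr, hrH⟩ := hQnet H hH
    have hrq : r = q := by
      by_contra hne
      exact hmiss r (Finset.mem_erase.2 ⟨hne, hr⟩) hrH
    subst hrq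
    obtain ⟨⟨a, b, c, -, rfl⟩, hcard⟩ := hH
    refine ⟨(a, b, -c), fun _ => ⟨?_, ?_, ?_⟩⟩
    · have : a * r 0 + b * r 1 ≤ c := hrH
      simp only [ev]; linarith
    · intro s hs hsr
      have : ¬ (a * s 0 + b * s 1 ≤ c) := hmiss s (Finset.mem_erase.2 ⟨hsr, hs⟩)
      simp only [ev]; linarith
    · convert hcard using 2
      rw [← Set.ncard_coe_finset]
      congr 1
      ext x
      simp [ev, and_comm]
  choose f hf using hpriv
  have hsep : ∀ q : E2, ∃ g : ℝ × ℝ × ℝ, q ∈ Q → (ev g q < 0 ∧ ∀ y ∈ P, y ≠ q → 0 < ev g y) := by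
    intro q
    by_cases hq : q ∈ Q
    · obtain ⟨g, hg⟩ := ext_sep P q (Finset.mem_filter.1 (hQX hq)).2
      exact ⟨g, fun _ => hg⟩
    · exact ⟨0, fun h => absurd h hq⟩
  choose g hg using hsep
  -- every point lies in at most two
  have htwo : ∀ p ∈ P, (Q.filter (fun q => ev (f q) p ≤ 0)).card ≤ 2 := by
    intro p hp
    by_contra hc
    push Not at hc
    obtain ⟨q₁, q₂, q₃, m1, m2, m3, d12, d13, d23⟩ := Finset.two_lt_card_iff.1 hc
    rw [Finset.mem_filter] at m1 m2 m3
    have hlt : ({q₁, q₂, q₃} : Finset E2).card < Q.card :=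
      lt_of_le_of_lt Finset.card_le_three (by omega)
    obtain ⟨q₄, h4, h4n⟩ := Finset.exists_mem_notMem_of_card_lt_card hlt
    simp only [Finset.mem_insert, Finset.mem_singleton, not_or] at h4n
    obtain ⟨d41, d42, d43⟩ := h4n
    obtain ⟨m1, p1⟩ := m1
    obtain ⟨m2, p2⟩ := m2
    obtain ⟨m3, p3⟩ := m3
    have hpq : ∀ q ∈ Q, p ≠ q := by
      rintro q hq rfl
      by_cases h : p = q₁
      · subst h
        exact absurd p2 (not_le.2 ((hf q₂ m2).2.1 p hq d12))
      · exact absurd p1 (not_le.2 ((hf q₁ m1).2.1 p hq h))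
    have F : ∀ q ∈ Q, ∀ r ∈ Q, r ≠ q → 0 < ev (f q) r := fun q hq => (hf q hq).2.1
    have G : ∀ q ∈ Q, ∀ r ∈ Q, r ≠ q → 0 < ev (g q) r :=
      fun q hq r hr h => (hg q hq).2 r (hQP hr) h
    exact five p1 p2 p3 (hf _ m1).1 (hf _ m2).1 (hf _ m3).1
      (F _ m1 _ m2 d12.symm) (F _ m1 _ m3 d13.symm) (F _ m1 _ h4 d41)
      (F _ m2 _ m1 d12) (F _ m2 _ m3 d23.symm) (F _ m2 _ h4 d42)
      (F _ m3 _ m1 d13) (F _ m3 _ m2 d23) (F _ m3 _ h4 d43)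
      ((hg _ m1).2 p hp (hpq _ m1)) (hg _ m1).1
      (G _ m1 _ m2 d12.symm) (G _ m1 _ m3 d13.symm) (G _ m1 _ h4 d41)
      ((hg _ m2).2 p hp (hpq _ m2)) 
      (G _ m2 _ m1 d12) (hg _ m2).1 (G _ m2 _ m3 d23.symm) (G _ m2 _ h4 d42)
      ((hg _ m3).2 p hp (hpq _ m3)) 
      (G _ m3 _ m1 d13) (G _ m3 _ m2 d23) (hg _ m3).1 (G _ m3 _ h4 d43)
      (G _ h4 _ m1 (Ne.symm d41)) (G _ h4 _ m2 (Ne.symm d42)) (G _ h4 _ m3 (Ne.symm d43))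
      (hg _ h4).1
  have hdc := Finset.sum_card_bipartiteAbove_eq_sum_card_bipartiteBelow
    (s := Q) (t := P) (fun q p => ev (f q) p ≤ 0)
  have hub : ∑ p ∈ P, (Q.bipartiteBelow (fun q p => ev (f q) p ≤ 0) p).card ≤ P.card * 2 := by
    rw [← smul_eq_mul]
    exact Finset.sum_le_card_nsmul _ _ _ htwo
  have hQne : Q.Nonempty := Finset.card_pos.1 (by omega)
  have hlb : ∑ _q ∈ Q, (2 / ((i : ℝ) + 1)) * P.card <
      ∑ q ∈ Q, ((P.bipartiteAbove (fun q p => ev (f q) p ≤ 0) q).card : ℝ) :=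
    Finset.sum_lt_sum_of_nonempty hQne (fun q hq => (hf q hq).2.2)
  rw [← hdc] at hub
  have hub' : (∑ q ∈ Q, ((P.bipartiteAbove (fun q p => ev (f q) p ≤ 0) q).card : ℝ))
      ≤ P.card * 2 := by exact_mod_cast hub
  rw [Finset.sum_const, nsmul_eq_mul] at hlb
  have hQc : ((i : ℝ) + 1) ≤ Q.card := by exact_mod_cast hcon
  have hip : (0 : ℝ) < (i : ℝ) + 1 := by positivity
  have : ((i : ℝ) + 1) * ((2 / ((i : ℝ) + 1)) * P.card) ≤ Q.card * ((2 / ((i : ℝ) + 1)) * P.card) :=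
    mul_le_mul_of_nonneg_right hQc (by positivity)
  have h2 : ((i : ℝ) + 1) * ((2 / ((i : ℝ) + 1)) * P.card) = P.card * 2 := by
    field_simp
  linarith

theorem strong_halfplane_net (i : ℕ) (hi : 2 ≤ i) (P : Finset (EuclideanSpace ℝ (Fin 2))) :
    ∃ Q : Finset (EuclideanSpace ℝ (Fin 2)), Q ⊆ P ∧ Q.card ≤ i ∧
      ∀ H : Set (EuclideanSpace ℝ (Fin 2)), IsHalfplane H →
        (2 / ((i : ℝ) + 1)) * P.card < ((H ∩ ↑P).ncard : ℝ) → ∃ q ∈ Q, q ∈ H := by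
  classical
  rcases hi.eq_or_lt with rfl | h3
  swap
  · exact big_net i h3 P
  rcases P.eq_empty_or_nonempty with rfl | hP
  · refine ⟨∅, by simp, by simp, ?_⟩
    intro H _ h
    simp at h
  obtain ⟨a, ha, b, hb, hab⟩ := two_net P hP
  refine ⟨{a, b}, ?_, Finset.card_le_two, ?_⟩
  · intro x hx
    simp only [Finset.mem_insert, Finset.mem_singleton] at hx
    rcases hx with rfl | rfl <;> assumption
  rintro H ⟨c₁, c₂, d, -, rfl⟩ hcard
  have hset : (({x : E2 | c₁ * x 0 + c₂ * x 1 ≤ d} ∩ ↑P).ncard) =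
      (P.filter (fun x => c₁ * x 0 + c₂ * x 1 ≤ d)).card := by
    rw [← Set.ncard_coe_finset]
    congr 1
    ext x
    simp [and_comm]
  rw [hset] at hcard
  have hc : 2 * P.card < 3 * (P.filter (fun x => c₁ * x 0 + c₂ * x 1 ≤ d)).card := by
    have : (2 : ℝ) * P.card < 3 * (P.filter (fun x => c₁ * x 0 + c₂ * x 1 ≤ d)).card := by
      norm_num at hcard
      linarith
    exact_mod_cast this
  rcases hab _ (Finset.filter_subset _ _) hc c₁ c₂ d (fun y hy => (Finset.mem_filter.1 hy).2)
    with h | h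
  · exact ⟨a, by simp, h⟩
  · exact ⟨b, by simp, h⟩
end

section
/- For every finite set P of n points in ℝ², there exist points a, b ∈ P such that every closed disk D with |D ∩ P| > (2/3)·n contains a or b. In other words, every finite planar point set admits a strong (2/3)-net of size 2 with respect to disks. -/
/-- A disk in ℝ²: a closed ball with nonnegative radius. -/
def IsDisk (D : Set (EuclideanSpace ℝ (Fin 2))) : Prop :=
  ∃ (c : EuclideanSpace ℝ (Fin 2)) (r : ℝ), 0 ≤ r ∧ D = Metric.closedBall c r

/-- Heavy subsets, at most three at a time, share a point. -/
lemma common_point (P : Finset E2) (hP : P.Nonempty) (I : Finset (Finset E2)) (hI : I.card ≤ 3)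
    (h : ∀ T ∈ I, T ⊆ P ∧ 2 * P.card < 3 * T.card) : ∃ p ∈ P, ∀ T ∈ I, p ∈ T := by
  classical
  by_contra hcon
  push Not at hcon
  have hsub : P ⊆ I.biUnion (fun T => P \ T) := by
    intro p hp
    obtain ⟨T, hT, hpT⟩ := hcon p hp
    exact Finset.mem_biUnion.2 ⟨T, hT, Finset.mem_sdiff.2 ⟨hp, hpT⟩⟩
  have h1 := Finset.card_le_card hsub
  have h2 : (I.biUnion (fun T => P \ T)).card ≤ I.card * ((P.card - 1) / 3) := by
    apply Finset.card_biUnion_le_card_mul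
    intro T hT
    obtain ⟨hs, hc⟩ := h T hT
    rw [Finset.card_sdiff_of_subset hs]
    have := Finset.card_le_card hs
    omega
  have h3 : I.card * ((P.card - 1) / 3) ≤ 3 * ((P.card - 1) / 3) := Nat.mul_le_mul_right _ hI
  have := hP.card_pos
  omega

lemma center_exists (P : Finset E2) (hP : P.Nonempty) :
    ∃ x : E2, ∀ T : Finset E2, T ⊆ P → 2 * P.card < 3 * T.card → x ∈ convexHull ℝ (T : Set E2) := by
  classical
  have key : (⋂ T ∈ P.powerset.filter (fun T => 2 * P.card < 3 * T.card),
      convexHull ℝ (T : Set E2)).Nonempty := by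
    apply Convex.helly_theorem' (𝕜 := ℝ)
    · intro T _
      exact convex_convexHull ℝ _
    · intro I hI hc
      have hc' : I.card ≤ 3 := by simpa using hc
      obtain ⟨p, _, hp⟩ := common_point P hP I hc' (by
        intro T hT
        have := hI hT
        simpa using this)
      exact ⟨p, Set.mem_iInter₂.2 fun T hT => subset_convexHull ℝ _ (hp T hT)⟩
  obtain ⟨x, hx⟩ := key
  refine ⟨x, fun T h1 h2 => ?_⟩
  exact Set.mem_iInter₂.1 hx T (by simp [h1, h2])

def Feas (P : Finset E2) (x : E2) (w : E2 → ℝ) : Prop :=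
  (∀ e, 0 ≤ w e) ∧ (∀ e, e ∉ P → w e = 0) ∧ ∑ e ∈ P, w e = 1 ∧ ∑ e ∈ P, w e • e = x

noncomputable def cst (P : Finset E2) (w : E2 → ℝ) : ℝ := ∑ e ∈ P, w e * ‖e‖ ^ 2

lemma feas_of_mem (P T : Finset E2) (hT : T ⊆ P) (x : E2) (hx : x ∈ convexHull ℝ (T : Set E2)) :
    ∃ w, Feas P x w ∧ ∀ e, e ∉ T → w e = 0 := by
  classical
  rw [Finset.mem_convexHull'] at hx
  obtain ⟨w, h0, h1, h2⟩ := hx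
  refine ⟨fun e => if e ∈ T then w e else 0, ⟨?_, ?_, ?_, ?_⟩, ?_⟩
  · intro e
    dsimp only
    split_ifs with h
    · exact h0 e h
    · exact le_rfl
  · intro e he
    exact if_neg fun h => he (hT h)
  · rw [← h1, ← Finset.sum_subset hT]
    · exact Finset.sum_congr rfl fun e he => if_pos he
    · intro e _ he
      exact if_neg he
  · rw [← h2, ← Finset.sum_subset hT]
    · exact Finset.sum_congr rfl fun e he => by dsimp only; rw [if_pos he]
    · intro e _ he
      dsimp only
      rw [if_neg he, zero_smul]
  · intro e he
    exact if_neg he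

lemma exists_opt (P : Finset E2) (x : E2) (hx : ∃ w, Feas P x w) :
    ∃ w, Feas P x w ∧ ∀ w', Feas P x w' → cst P w ≤ cst P w' := by
  have hcomp : IsCompact {w | Feas P x w} := by
    have hK : IsCompact (Set.univ.pi fun _ : E2 => Set.Icc (0 : ℝ) 1) :=
      isCompact_univ_pi fun _ => isCompact_Icc
    refine hK.of_isClosed_subset ?_ ?_
    · have e1 : {w | Feas P x w} = (⋂ e, {w : E2 → ℝ | 0 ≤ w e}) ∩
          ((⋂ e, ⋂ (_ : e ∉ P), {w : E2 → ℝ | w e = 0}) ∩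
          ({w | ∑ e ∈ P, w e = 1} ∩ {w | ∑ e ∈ P, w e • e = x})) := by
        ext w
        simp [Feas]
      rw [e1]
      refine IsClosed.inter (isClosed_iInter fun e => ?_) (IsClosed.inter
        (isClosed_iInter fun e => isClosed_iInter fun _ => ?_) (IsClosed.inter ?_ ?_))
      · exact isClosed_le continuous_const (continuous_apply e)
      · exact isClosed_eq (continuous_apply e) continuous_const
      · exact isClosed_eq (by fun_prop) continuous_const
      · exact isClosed_eq (by fun_prop) continuous_const
    · rintro w ⟨h0, h1, h2, -⟩ e -
      refine ⟨h0 e, ?_⟩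
      by_cases he : e ∈ P
      · rw [← h2]
        exact Finset.single_le_sum (fun i _ => h0 i) he
      · rw [h1 e he]
        exact zero_le_one
  obtain ⟨w, hw, hm⟩ := hcomp.exists_isMinOn (f := cst P) hx (by unfold cst; fun_prop)
  exact ⟨w, hw, fun w' h' => hm h'⟩

lemma exch (P : Finset E2) (x : E2) (w v : E2 → ℝ) (hw : Feas P x w) (hv0 : ∀ e, e ∉ P → v e = 0)
    (hv1 : ∑ e ∈ P, v e = 0) (hv2 : ∑ e ∈ P, v e • e = 0) (hneg : ∃ e ∈ P, v e < 0)
    (hS : ∀ e ∈ P, v e < 0 → 0 < w e) :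
    ∃ ε : ℝ, 0 < ε ∧ Feas P x (fun e => w e + ε * v e) ∧
      ∃ e ∈ P, 0 < w e ∧ w e + ε * v e = 0 := by
  classical
  obtain ⟨e0, he0, hm⟩ := (P.filter (fun e => v e < 0)).exists_min_image
    (fun e => w e / (-v e)) (by obtain ⟨e, he, h⟩ := hneg; exact ⟨e, by simp [he, h]⟩)
  rw [Finset.mem_filter] at he0
  obtain ⟨h1, h2⟩ := he0
  have hpos := hS e0 h1 h2
  have hε : 0 < w e0 / (-v e0) := div_pos hpos (by linarith)
  refine ⟨w e0 / (-v e0), hε, ⟨?_, ?_, ?_, ?_⟩, e0, h1, hpos, ?_⟩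
  · intro e
    by_cases he : e ∈ P
    · by_cases hve : v e < 0
      · have := hm e (by simp [he, hve])
        rw [le_div_iff₀ (by linarith)] at this
        dsimp only
        linarith
      · have := mul_nonneg hε.le (not_lt.1 hve)
        have := hw.1 e
        dsimp only
        linarith
    · simp [hv0 e he, hw.2.1 e he]
  · intro e he
    simp [hv0 e he, hw.2.1 e he]
  · rw [Finset.sum_add_distrib, ← Finset.mul_sum, hv1, hw.2.2.1]
    ring
  · simp only [add_smul, mul_smul]
    rw [Finset.sum_add_distrib, ← Finset.smul_sum, hv2, hw.2.2.2]
    simp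
  · have : v e0 ≠ 0 := h2.ne
    field_simp
    ring

lemma cst_add (P : Finset E2) (w v : E2 → ℝ) (ε : ℝ) :
    cst P (fun e => w e + ε * v e) = cst P w + ε * cst P v := by
  unfold cst
  rw [Finset.mul_sum, ← Finset.sum_add_distrib]
  exact Finset.sum_congr rfl fun e _ => by ring

/-- An optimal solution with affinely independent support. -/
lemma exists_good (P : Finset E2) (x : E2) (hx : ∃ w, Feas P x w) :
    ∃ w, Feas P x w ∧ (∀ w', Feas P x w' → cst P w ≤ cst P w') ∧
      ∀ v : E2 → ℝ, (∀ e, ¬ (0 < w e) → v e = 0) → ∑ e ∈ P, v e = 0 → ∑ e ∈ P, v e • e = 0 →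
        ∀ e, v e = 0 := by
  classical
  obtain ⟨w0, hw0⟩ := exists_opt P x hx
  obtain ⟨w, ⟨hw, hopt⟩, hmin⟩ := (measure fun w : E2 → ℝ => (P.filter (fun e => 0 < w e)).card).wf.has_min
    {w | Feas P x w ∧ ∀ w', Feas P x w' → cst P w ≤ cst P w'} ⟨w0, hw0⟩
  refine ⟨w, hw, hopt, ?_⟩
  have main : ∀ v : E2 → ℝ, (∀ e, ¬ (0 < w e) → v e = 0) → ∑ e ∈ P, v e = 0 →
      ∑ e ∈ P, v e • e = 0 → cst P v ≤ 0 → ∀ e, v e = 0 := by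
    intro v hv hv1 hv2 hc
    by_contra hne
    push Not at hne
    have hv0 : ∀ e, e ∉ P → v e = 0 := fun e he => hv e (by rw [hw.2.1 e he]; exact lt_irrefl _)
    have hneg : ∃ e ∈ P, v e < 0 := by
      by_contra hcon
      push Not at hcon
      rw [Finset.sum_eq_zero_iff_of_nonneg hcon] at hv1
      obtain ⟨e, he⟩ := hne
      by_cases h : e ∈ P
      · exact he (hv1 e h)
      · exact he (hv0 e h)
    obtain ⟨ε, hε, hf, e, heP, hwe, hze⟩ := exch P x w v hw hv0 hv1 hv2 hneg (by
      intro e _ h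
      by_contra h'
      rw [hv e h'] at h
      exact lt_irrefl _ h)
    refine hmin (fun e => w e + ε * v e) ⟨hf, ?_⟩ ?_
    · intro w' hw'
      rw [cst_add]
      have := hopt w' hw'
      nlinarith
    · refine Finset.card_lt_card ?_
      rw [Finset.ssubset_iff_of_subset]
      · exact ⟨e, by simp [heP, hwe], by simp [hze]⟩
      · intro e' he'
        rw [Finset.mem_filter] at he' ⊢
        refine ⟨he'.1, ?_⟩
        by_contra h'
        have h1 : 0 < w e' + ε * v e' := he'.2
        rw [hv e' h'] at h1
        exact h' (by simpa using h1)
  intro v hv hv1 hv2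
  rcases le_total (cst P v) 0 with h | h
  · exact main v hv hv1 hv2 h
  · have := main (fun e => - v e) (fun e he => by simp [hv e he]) (by simp [hv1])
      (by simp [hv2]) (by
        have e1 : cst P (fun e => - v e) = - cst P v := by simp [cst]
        rw [e1]; linarith)
    intro e
    simpa using this e

lemma sum_pow (P : Finset E2) (x : E2) (w : E2 → ℝ) (hw : Feas P x w) (c : E2) (r : ℝ) :
    ∑ e ∈ P, w e * (‖e - c‖ ^ 2 - r ^ 2) = cst P w - 2 * inner ℝ x c + ‖c‖ ^ 2 - r ^ 2 := by
  have h1 : inner ℝ x c = ∑ e ∈ P, w e * inner ℝ e c := by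
    rw [← hw.2.2.2, sum_inner]
    exact Finset.sum_congr rfl fun e _ => by rw [real_inner_smul_left]
  have h2 : ‖c‖ ^ 2 - r ^ 2 = ∑ e ∈ P, w e * (‖c‖ ^ 2 - r ^ 2) := by
    rw [← Finset.sum_mul, hw.2.2.1, one_mul]
  rw [add_sub_assoc, h1, h2, cst, Finset.mul_sum, ← Finset.sum_sub_distrib, ← Finset.sum_add_distrib]
  refine Finset.sum_congr rfl fun e _ => ?_
  rw [norm_sub_sq_real]
  ring

lemma mem_ball_iff (y c : E2) (r : ℝ) (hr : 0 ≤ r) :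
    y ∈ Metric.closedBall c r ↔ ‖y - c‖ ^ 2 - r ^ 2 ≤ 0 := by
  rw [Metric.mem_closedBall, dist_eq_norm, sub_nonpos, sq_le_sq₀ (norm_nonneg _) hr]

lemma claim1 (P : Finset E2) (x : E2) (w : E2 → ℝ) (hw : Feas P x w)
    (hopt : ∀ w', Feas P x w' → cst P w ≤ cst P w') (c : E2) (r : ℝ) (hr : 0 ≤ r)
    (T : Finset E2) (hT : T ⊆ P) (hTD : ∀ e ∈ T, e ∈ Metric.closedBall c r)
    (hx : x ∈ convexHull ℝ (T : Set E2)) : ∃ s, 0 < w s ∧ s ∈ Metric.closedBall c r := by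
  by_contra hcon
  push Not at hcon
  obtain ⟨u, hu, hu0⟩ := feas_of_mem P T hT x hx
  have h1 := sum_pow P x w hw c r
  have h2 := sum_pow P x u hu c r
  have h3 : ∑ e ∈ P, u e * (‖e - c‖ ^ 2 - r ^ 2) ≤ 0 := by
    apply Finset.sum_nonpos
    intro e _
    by_cases he : e ∈ T
    · exact mul_nonpos_of_nonneg_of_nonpos (hu.1 e) ((mem_ball_iff _ _ _ hr).1 (hTD e he))
    · simp [hu0 e he]
  have hp : ∀ e, 0 < w e → 0 < ‖e - c‖ ^ 2 - r ^ 2 := fun e he => by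
    have := hcon e he
    rw [mem_ball_iff _ _ _ hr] at this
    exact not_le.1 this
  have h4 : 0 < ∑ e ∈ P, w e * (‖e - c‖ ^ 2 - r ^ 2) := by
    apply Finset.sum_pos'
    · intro e _
      rcases (hw.1 e).lt_or_eq with h | h
      · exact (mul_pos h (hp e h)).le
      · simp [← h]
    · have : ∃ e ∈ P, 0 < w e := by
        by_contra hc
        push Not at hc
        have := Finset.sum_nonpos hc
        rw [hw.2.2.1] at this
        linarith
      obtain ⟨e, he, h⟩ := this
      exact ⟨e, he, mul_pos h (hp e h)⟩
  have := hopt u hu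
  linarith

lemma conv3 (s : Set E2) (hs : Convex ℝ s) (a b d c : E2) (ha : a ∈ s) (hb : b ∈ s) (hd : d ∈ s)
    (α β δ : ℝ) (h1 : 0 ≤ α) (h2 : 0 ≤ β) (h3 : 0 < δ)
    (h : (α + β + δ) • c = α • a + β • b + δ • d) : c ∈ s := by
  have hp : 0 < α + β + δ := by linarith
  have : c = (α / (α + β + δ)) • a + (β / (α + β + δ)) • b + (δ / (α + β + δ)) • d := by
    have := congrArg (fun y => (α + β + δ)⁻¹ • y) h
    simp only [smul_smul, smul_add, inv_mul_cancel₀ hp.ne', one_smul] at this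
    rw [this]
    simp only [div_eq_inv_mul]
  rw [this]
  have := hs.sum_mem (t := Finset.univ) (w := ![α / (α + β + δ), β / (α + β + δ), δ / (α + β + δ)])
    (z := ![a, b, d]) (by
      intro i _
      fin_cases i <;> simp <;> positivity) (by
      simp [Fin.sum_univ_three]; field_simp) (by
      intro i _
      fin_cases i <;> simpa)
  simpa [Fin.sum_univ_three] using this

/-- `p` lies beyond the vertex `c`. -/
lemma case_beyond (A B : Set E2) (hA : Convex ℝ A) (hB : Convex ℝ B) (a b c p x : E2)
    (aA : a ∈ A) (pA : p ∈ A) (xA : x ∈ A) (cA : c ∉ A) (bB : b ∈ B) (pB : p ∈ B) (xB : x ∈ B)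
    (cB : c ∉ B) (α β γ l m k : ℝ) (hα : α ≤ 0) (hβ : β ≤ 0) (hs : α + β + γ = 1)
    (hp : p = α • a + β • b + γ • c) (hl : 0 < l) (hm : 0 < m) (hk : 0 < k) (hs' : l + m + k = 1)
    (hx : x = l • a + m • b + k • c) : False := by
  rcases le_total (β * l) (α * m) with h | h
  · -- eliminate `a`
    refine cB (conv3 B hB b x p c bB xB pB (-β * l + α * m) (-α) l (by linarith) (by linarith) hl ?_)
    have e1 : k = 1 - l - m := by linarith
    have e2 : γ = 1 - α - β := by linarith
    rw [hp, hx, e1, e2]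
    module
  · refine cA (conv3 A hA a x p c aA xA pA (-α * m + β * l) (-β) m (by linarith) (by linarith) hm ?_)
    have e1 : k = 1 - l - m := by linarith
    have e2 : γ = 1 - α - β := by linarith
    rw [hp, hx, e1, e2]
    module

lemma pow_aff (a b c p o : E2) (r α β γ : ℝ) (hs : α + β + γ = 1)
    (hp : p = α • a + β • b + γ • c)
    (hg : α * ‖a‖ ^ 2 + β * ‖b‖ ^ 2 + γ * ‖c‖ ^ 2 ≤ ‖p‖ ^ 2) :
    α * (‖a - o‖ ^ 2 - r ^ 2) + β * (‖b - o‖ ^ 2 - r ^ 2) + γ * (‖c - o‖ ^ 2 - r ^ 2)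
      ≤ ‖p - o‖ ^ 2 - r ^ 2 := by
  have h1 : inner ℝ p o = α * inner ℝ a o + β * inner ℝ b o + γ * inner ℝ c o := by
    rw [hp]; simp [inner_add_left, real_inner_smul_left]
  have e2 : γ = 1 - α - β := by linarith
  rw [norm_sub_sq_real, norm_sub_sq_real, norm_sub_sq_real, norm_sub_sq_real, h1]
  subst e2
  linarith

/-- `p` lies opposite of `c` across the edge `ab`. -/
lemma case_across (a b c p o : E2) (r α β γ : ℝ) (hr : 0 ≤ r) (hs : α + β + γ = 1)
    (hp : p = α • a + β • b + γ • c)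
    (hg : α * ‖a‖ ^ 2 + β * ‖b‖ ^ 2 + γ * ‖c‖ ^ 2 ≤ ‖p‖ ^ 2)
    (hα : 0 ≤ α) (hβ : 0 ≤ β) (hγ : γ < 0) (ha : a ∉ Metric.closedBall o r)
    (hb : b ∉ Metric.closedBall o r) (hc : c ∈ Metric.closedBall o r)
    (hpp : p ∈ Metric.closedBall o r) : False := by
  have h := pow_aff a b c p o r α β γ hs hp hg
  rw [mem_ball_iff _ _ _ hr] at ha hb hc hpp
  rw [not_le] at ha hb
  have h1 := mul_nonneg hα ha.le
  have h2 := mul_nonneg hβ hb.le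
  have h3 := mul_nonneg_of_nonpos_of_nonpos hγ.le hc
  rcases hα.lt_or_eq with h4 | h4
  · have := mul_pos h4 ha
    linarith
  · have : 0 < β := by linarith
    have := mul_pos this hb
    linarith

/-- `p` lies in the triangle. -/
lemma case_inside (a b c p : E2) (α β γ : ℝ) (hs : α + β + γ = 1)
    (hp : p = α • a + β • b + γ • c)
    (hg : α * ‖a‖ ^ 2 + β * ‖b‖ ^ 2 + γ * ‖c‖ ^ 2 ≤ ‖p‖ ^ 2)
    (hα : 0 ≤ α) (hβ : 0 ≤ β) (hγ : 0 ≤ γ) (ha : p ≠ a) (hb : p ≠ b) (hc : p ≠ c) : False := by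
  have h := pow_aff a b c p p 0 α β γ hs hp hg
  have pa : 0 < ‖a - p‖ ^ 2 := by have := norm_pos_iff.2 (sub_ne_zero.2 ha.symm); positivity
  have pb : 0 < ‖b - p‖ ^ 2 := by have := norm_pos_iff.2 (sub_ne_zero.2 hb.symm); positivity
  have pc : 0 < ‖c - p‖ ^ 2 := by have := norm_pos_iff.2 (sub_ne_zero.2 hc.symm); positivity
  simp at h
  have h1 := mul_nonneg hα pa.le
  have h2 := mul_nonneg hβ pb.le
  have h3 := mul_nonneg hγ pc.le
  have : α = 0 := by
    by_contra h0
    have := mul_pos (hα.lt_of_ne' h0) pa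
    linarith
  have : β = 0 := by
    by_contra h0
    have := mul_pos (hβ.lt_of_ne' h0) pb
    linarith
  have : γ = 0 := by
    by_contra h0
    have := mul_pos (hγ.lt_of_ne' h0) pc
    linarith
  linarith

/-- Barycentric coordinates of `p` plus optimality. -/
lemma bary (P : Finset E2) (x : E2) (w : E2 → ℝ) (hw : Feas P x w)
    (hopt : ∀ w', Feas P x w' → cst P w ≤ cst P w')
    (hind : ∀ v : E2 → ℝ, (∀ e, ¬ (0 < w e) → v e = 0) → ∑ e ∈ P, v e = 0 →
      ∑ e ∈ P, v e • e = 0 → ∀ e, v e = 0)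
    (a b c p : E2) (hab : a ≠ b) (hac : a ≠ c) (hbc : b ≠ c) (hpa : p ≠ a) (hpb : p ≠ b)
    (hpc : p ≠ c) (hp : p ∈ P) (ha : 0 < w a) (hb : 0 < w b) (hc : 0 < w c) :
    ∃ α β γ : ℝ, α + β + γ = 1 ∧ p = α • a + β • b + γ • c ∧
      α * ‖a‖ ^ 2 + β * ‖b‖ ^ 2 + γ * ‖c‖ ^ 2 ≤ ‖p‖ ^ 2 := by
  classical
  have inP : ∀ e, 0 < w e → e ∈ P := fun e he => by
    by_contra h
    rw [hw.2.1 e h] at he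
    exact lt_irrefl _ he
  have hsub : ({a, b, c, p} : Finset E2) ⊆ P := by
    intro e he
    simp only [Finset.mem_insert, Finset.mem_singleton] at he
    rcases he with rfl | rfl | rfl | rfl
    exacts [inP _ ha, inP _ hb, inP _ hc, hp]
  have hsum : ∀ {M : Type} [AddCommMonoid M] (f : E2 → M),
      ∑ e ∈ ({a, b, c, p} : Finset E2), f e = f a + (f b + (f c + f p)) := by
    intro M _ f
    rw [Finset.sum_insert (by simp [hab, hac, hpa.symm]), Finset.sum_insert (by simp [hbc, hpb.symm]),
      Finset.sum_insert (by simp [hpc.symm]), Finset.sum_singleton]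
  have hcard : ({a, b, c, p} : Finset E2).card = 4 := by
    rw [Finset.card_insert_of_notMem (by simp [hab, hac, hpa.symm]),
      Finset.card_insert_of_notMem (by simp [hbc, hpb.symm]),
      Finset.card_insert_of_notMem (by simp [hpc.symm]), Finset.card_singleton]
  obtain ⟨f, f1, f2, f3⟩ := Module.exists_nontrivial_relation_sum_zero_of_finrank_succ_lt_card
    (R := ℝ) (t := ({a, b, c, p} : Finset E2)) (by rw [hcard]; simp)
  have hbig : ∀ (g : E2 → ℝ), (∀ e, e ∉ ({a, b, c, p} : Finset E2) → g e = 0) →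
      (∑ e ∈ P, g e = g a + (g b + (g c + g p))) ∧
      (∑ e ∈ P, g e • e = g a • a + (g b • b + (g c • c + g p • p))) ∧
      (cst P g = g a * ‖a‖ ^ 2 + (g b * ‖b‖ ^ 2 + (g c * ‖c‖ ^ 2 + g p * ‖p‖ ^ 2))) := by
    intro g hg
    refine ⟨?_, ?_, ?_⟩
    · rw [← hsum g]
      exact (Finset.sum_subset hsub fun e _ he => hg e he).symm
    · rw [← hsum (fun e => g e • e)]
      exact (Finset.sum_subset hsub fun e _ he => by rw [hg e he, zero_smul]).symm
    · rw [← hsum (fun e => g e * ‖e‖ ^ 2), cst]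
      exact (Finset.sum_subset hsub fun e _ he => by rw [hg e he, zero_mul]).symm
  rw [hsum] at f1 f2
  have hfp : f p ≠ 0 := by
    intro h0
    set g : E2 → ℝ := fun e => if e ∈ ({a, b, c, p} : Finset E2) then f e else 0 with hgdef
    have gin : ∀ e ∈ ({a, b, c, p} : Finset E2), g e = f e := fun e he => if_pos he
    obtain ⟨g1, g2, -⟩ := hbig g (fun e he => if_neg he)
    have ga := gin a (by simp)
    have gb := gin b (by simp)
    have gc := gin c (by simp)
    have gp := gin p (by simp)
    have hz := hind g (by
      intro e he
      by_cases h : e ∈ ({a, b, c, p} : Finset E2)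
      · rw [gin e h]
        simp only [Finset.mem_insert, Finset.mem_singleton] at h
        rcases h with rfl | rfl | rfl | rfl
        exacts [absurd ha he, absurd hb he, absurd hc he, h0]
      · exact if_neg h) (by rw [g1, ga, gb, gc, gp, f2]) (by rw [g2, ga, gb, gc, gp, f1])
    obtain ⟨e, he, hne⟩ := f3
    exact hne (by rw [← gin e he]; exact hz e)
  have hs : (-f a / f p) + (-f b / f p) + (-f c / f p) = 1 := by
    field_simp
    linarith
  have hpe : p = (-f a / f p) • a + (-f b / f p) • b + (-f c / f p) • c := by
    have h1 : f p • p = -(f a • a) - f b • b - f c • c := by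
      rw [← sub_eq_zero, ← f1]; module
    have h2 := congrArg (fun y => (f p)⁻¹ • y) h1
    simp only [smul_smul, inv_mul_cancel₀ hfp, one_smul] at h2
    refine h2.trans ?_
    module
  generalize -f a / f p = α at hs hpe
  generalize -f b / f p = β at hs hpe
  generalize -f c / f p = γ at hs hpe
  refine ⟨α, β, γ, hs, hpe, ?_⟩
  set g : E2 → ℝ := fun e => if e = p then 1 else if e = a then -α else if e = b then -β
    else if e = c then -γ else 0 with hgdef
  have ga : g a = -α := by simp [hgdef, hpa.symm]
  have gb : g b = -β := by simp [hgdef, hpb.symm, hab.symm]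
  have gc : g c = -γ := by simp [hgdef, hpc.symm, hac.symm, hbc.symm]
  have gp : g p = 1 := by simp [hgdef]
  have goff : ∀ e, e ∉ ({a, b, c, p} : Finset E2) → g e = 0 := by
    intro e he
    simp only [Finset.mem_insert, Finset.mem_singleton, not_or] at he
    simp [hgdef, he]
  obtain ⟨g1, g2, g3⟩ := hbig g goff
  rw [ga, gb, gc, gp] at g1 g2 g3
  have g1' : ∑ e ∈ P, g e = 0 := by rw [g1]; linarith
  have g2' : ∑ e ∈ P, g e • e = 0 := by
    rw [g2]
    have e3 : -α • a + (-β • b + (-γ • c + (1 : ℝ) • p)) = p - (α • a + β • b + γ • c) := by module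
    rw [e3, ← hpe, sub_self]
  obtain ⟨ε, hε, hf, -⟩ := exch P x w g hw (fun e he => goff e fun h => he (hsub h)) g1' g2' (by
      by_contra hcon
      push Not at hcon
      rw [Finset.sum_eq_zero_iff_of_nonneg hcon] at g1'
      have := g1' p hp
      linarith) (by
      intro e _ he
      by_cases h : e ∈ ({a, b, c, p} : Finset E2)
      · simp only [Finset.mem_insert, Finset.mem_singleton] at h
        rcases h with rfl | rfl | rfl | rfl
        · exact ha
        · exact hb
        · exact hc
        · linarith
      · rw [goff e h] at he
        exact absurd he (lt_irrefl _))
  have h1 := hopt _ hf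
  rw [cst_add] at h1
  have h2 : 0 ≤ cst P g := by
    by_contra h
    have := mul_neg_of_pos_of_neg hε (not_le.1 h)
    linarith
  rw [g3] at h2
  linarith

/-- Every finite planar point set admits a strong (2/3)-net of size 2 with respect to
closed disks. -/
theorem strong_two_thirds_net_size_two_disks (P : Finset (EuclideanSpace ℝ (Fin 2)))
    (hP : P.Nonempty) :
    ∃ a ∈ P, ∃ b ∈ P, ∀ D : Set (EuclideanSpace ℝ (Fin 2)), IsDisk D →
      (2 / 3 : ℝ) * P.card < ((D ∩ ↑P).ncard : ℝ) → a ∈ D ∨ b ∈ D := by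
  classical
  obtain ⟨x, hx⟩ := center_exists P hP
  obtain ⟨w, hw, hopt, hind⟩ := exists_good P x (by
    obtain ⟨w, hw, -⟩ := feas_of_mem P P subset_rfl x (hx P subset_rfl (by
      have := hP.card_pos; omega))
    exact ⟨w, hw⟩)
  have inP : ∀ e, 0 < w e → e ∈ P := fun e he => by
    by_contra h
    rw [hw.2.1 e h] at he
    exact lt_irrefl _ he
  -- trace of a disk
  have htr : ∀ D : Set E2, (2 / 3 : ℝ) * P.card < ((D ∩ ↑P).ncard : ℝ) →
      2 * P.card < 3 * (P.filter (fun e => e ∈ D)).card := by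
    intro D hD
    have e1 : D ∩ (P : Set E2) = ((P.filter (fun e => e ∈ D) : Finset E2) : Set E2) := by
      ext e; simp [and_comm]
    rw [e1, Set.ncard_coe_finset] at hD
    have : (2 * P.card : ℝ) < 3 * ((P.filter (fun e => e ∈ D)).card : ℝ) := by linarith
    exact_mod_cast this
  have hxD : ∀ c r, 2 * P.card < 3 * (P.filter (fun e => e ∈ Metric.closedBall c r)).card →
      x ∈ Metric.closedBall c r := by
    intro c r h
    refine convexHull_min ?_ (convex_closedBall c r) (hx _ (Finset.filter_subset _ _) h)
    intro e he
    simp only [Finset.coe_filter, Set.mem_ofPred_eq] at he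
    exact he.2
  have c1 : ∀ c r, 0 ≤ r → 2 * P.card < 3 * (P.filter (fun e => e ∈ Metric.closedBall c r)).card →
      ∃ s, 0 < w s ∧ s ∈ Metric.closedBall c r := by
    intro c r hr h
    exact claim1 P x w hw hopt c r hr _ (Finset.filter_subset _ _)
      (fun e he => (Finset.mem_filter.1 he).2) (hx _ (Finset.filter_subset _ _) h)
  -- the support
  obtain ⟨S, hS⟩ : ∃ S : Finset E2, ∀ e, e ∈ S ↔ 0 < w e :=
    ⟨P.filter (fun e => 0 < w e), fun e => by
      rw [Finset.mem_filter]; exact ⟨fun h => h.2, fun h => ⟨inP e h, h⟩⟩⟩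
  have hSP : S ⊆ P := fun e he => inP e ((hS e).1 he)
  have hS3 : S.card ≤ 3 := by
    by_contra hcon
    obtain ⟨f, f1, f2, e, he, hne⟩ :=
      Module.exists_nontrivial_relation_sum_zero_of_finrank_succ_lt_card
      (R := ℝ) (t := S) (by simp; omega)
    have := hind (fun e => if e ∈ S then f e else 0)
      (fun e he => if_neg fun h => he ((hS e).1 h)) (by
        rw [← Finset.sum_subset hSP fun e _ he => if_neg he]
        refine Eq.trans ?_ f2
        exact Finset.sum_congr rfl fun e he => if_pos he) (by
        rw [← Finset.sum_subset hSP fun e _ he => by rw [if_neg he, zero_smul]]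
        refine Eq.trans ?_ f1
        exact Finset.sum_congr rfl fun e he => by rw [if_pos he]) e
    rw [if_pos he] at this
    exact hne this
  have hSne : S.Nonempty := by
    by_contra h
    rw [Finset.not_nonempty_iff_eq_empty] at h
    have h0 : ∑ e ∈ P, w e ≤ 0 := Finset.sum_nonpos fun e _ => by
      by_contra h'
      have := (hS e).2 (not_le.1 h')
      rw [h] at this
      simp at this
    rw [hw.2.2.1] at h0
    linarith
  have hpos := hSne.card_pos
  have small : ∀ a b, 0 < w a → 0 < w b → (∀ s ∈ S, s = a ∨ s = b) →
      ∃ a ∈ P, ∃ b ∈ P, ∀ D : Set E2, IsDisk D →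
      (2 / 3 : ℝ) * P.card < ((D ∩ ↑P).ncard : ℝ) → a ∈ D ∨ b ∈ D := by
    intro a b ha hb hab
    refine ⟨a, inP a ha, b, inP b hb, ?_⟩
    rintro D ⟨c, r, hr, rfl⟩ hD
    obtain ⟨s, hs, hsD⟩ := c1 c r hr (htr _ hD)
    rcases hab s ((hS s).2 hs) with rfl | rfl
    · exact Or.inl hsD
    · exact Or.inr hsD
  have hcases : S.card = 1 ∨ S.card = 2 ∨ S.card = 3 := by omega
  rcases hcases with h | h | h
  · obtain ⟨a, rfl⟩ := Finset.card_eq_one.1 h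
    have ha := (hS a).1 (by simp)
    exact small a a ha ha (by simp)
  · obtain ⟨a, b, -, rfl⟩ := Finset.card_eq_two.1 h
    exact small a b ((hS a).1 (by simp)) ((hS b).1 (by simp)) (by simp)
  · obtain ⟨a, b, c, hab, hac, hbc, rfl⟩ := Finset.card_eq_three.1 h
    have ha := (hS a).1 (by simp)
    have hb := (hS b).1 (by simp)
    have hc := (hS c).1 (by simp)
    by_contra hcon
    have hbad : ∀ a b, 0 < w a → 0 < w b → ∃ o r, 0 ≤ r ∧
        2 * P.card < 3 * (P.filter (fun e => e ∈ Metric.closedBall o r)).card ∧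
        a ∉ Metric.closedBall o r ∧ b ∉ Metric.closedBall o r := by
      intro a b ha hb
      by_contra hno
      refine hcon ⟨a, inP a ha, b, inP b hb, ?_⟩
      rintro D ⟨o, r, hr, rfl⟩ hD
      by_contra hor
      rw [not_or] at hor
      exact hno ⟨o, r, hr, htr _ hD, hor.1, hor.2⟩
    obtain ⟨o1, r1, hr1, H1, a1, b1⟩ := hbad a b ha hb
    obtain ⟨o2, r2, hr2, H2, b2, c2⟩ := hbad b c hb hc
    obtain ⟨o3, r3, hr3, H3, a3, c3⟩ := hbad a c ha hc
    have m1 : c ∈ Metric.closedBall o1 r1 := by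
      obtain ⟨s, hs, hsD⟩ := c1 _ _ hr1 H1
      have := (hS s).2 hs
      simp only [Finset.mem_insert, Finset.mem_singleton] at this
      rcases this with rfl | rfl | rfl
      exacts [absurd hsD a1, absurd hsD b1, hsD]
    have m2 : a ∈ Metric.closedBall o2 r2 := by
      obtain ⟨s, hs, hsD⟩ := c1 _ _ hr2 H2
      have := (hS s).2 hs
      simp only [Finset.mem_insert, Finset.mem_singleton] at this
      rcases this with rfl | rfl | rfl
      exacts [hsD, absurd hsD b2, absurd hsD c2]
    have m3 : b ∈ Metric.closedBall o3 r3 := by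
      obtain ⟨s, hs, hsD⟩ := c1 _ _ hr3 H3
      have := (hS s).2 hs
      simp only [Finset.mem_insert, Finset.mem_singleton] at this
      rcases this with rfl | rfl | rfl
      exacts [absurd hsD a3, hsD, absurd hsD c3]
    obtain ⟨p, hpP, hp⟩ := common_point P hP
      {P.filter (fun e => e ∈ Metric.closedBall o1 r1), P.filter (fun e => e ∈ Metric.closedBall o2 r2),
        P.filter (fun e => e ∈ Metric.closedBall o3 r3)} Finset.card_le_three (by
        intro T hT
        simp only [Finset.mem_insert, Finset.mem_singleton] at hT
        rcases hT with rfl | rfl | rfl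
        exacts [⟨Finset.filter_subset _ _, H1⟩, ⟨Finset.filter_subset _ _, H2⟩,
          ⟨Finset.filter_subset _ _, H3⟩])
    have p1 := (Finset.mem_filter.1 (hp (P.filter (fun e => e ∈ Metric.closedBall o1 r1)) (by simp))).2
    have p2 := (Finset.mem_filter.1 (hp (P.filter (fun e => e ∈ Metric.closedBall o2 r2)) (by simp))).2
    have p3 := (Finset.mem_filter.1 (hp (P.filter (fun e => e ∈ Metric.closedBall o3 r3)) (by simp))).2
    have hpa : p ≠ a := fun h => a1 (h ▸ p1)
    have hpb : p ≠ b := fun h => b1 (h ▸ p1)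
    have hpc : p ≠ c := fun h => c2 (h ▸ p2)
    have x1 := hxD _ _ H1
    have x2 := hxD _ _ H2
    have x3 := hxD _ _ H3
    have hsum : ∀ {M : Type} [AddCommMonoid M] (f : E2 → M),
        ∑ e ∈ ({a, b, c} : Finset E2), f e = f a + (f b + f c) := by
      intro M _ f
      rw [Finset.sum_insert (by simp [hab, hac]), Finset.sum_insert (by simp [hbc]),
        Finset.sum_singleton]
    have w0 : ∀ e, e ∉ ({a, b, c} : Finset E2) → w e = 0 := fun e he =>
      le_antisymm (not_lt.1 fun h => he ((hS e).2 h)) (hw.1 e)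
    have ws : w a + w b + w c = 1 := by
      rw [← hw.2.2.1, ← Finset.sum_subset hSP fun e _ he => w0 e he, hsum]
      ring
    have wx : x = w a • a + w b • b + w c • c := by
      rw [← hw.2.2.2, ← Finset.sum_subset hSP fun e _ he => by rw [w0 e he, zero_smul],
        hsum (fun e => w e • e), add_assoc]
    obtain ⟨α, β, γ, hs, hpe, hg⟩ :=
      bary P x w hw hopt hind a b c p hab hac hbc hpa hpb hpc hpP ha hb hc
    have K1 := convex_closedBall o1 r1
    have K2 := convex_closedBall o2 r2
    have K3 := convex_closedBall o3 r3
    rcases lt_or_ge α 0 with hα | hα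
    · rcases lt_or_ge β 0 with hβ | hβ
      · exact case_beyond _ _ K2 K3 a b c p x m2 p2 x2 c2 m3 p3 x3 c3 α β γ (w a) (w b) (w c)
          hα.le hβ.le hs hpe ha hb hc ws wx
      · rcases lt_or_ge γ 0 with hγ | hγ
        · exact case_beyond _ _ K2 K1 a c b p x m2 p2 x2 b2 m1 p1 x1 b1 α γ β (w a) (w c) (w b)
            hα.le hγ.le (by linarith) (by rw [hpe]; abel) ha hc hb (by linarith) (by rw [wx]; abel)
        · exact case_across b c a p o2 r2 β γ α hr2 (by linarith) (by rw [hpe]; abel) (by linarith)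
            hβ hγ hα b2 c2 m2 p2
    · rcases lt_or_ge β 0 with hβ | hβ
      · rcases lt_or_ge γ 0 with hγ | hγ
        · exact case_beyond _ _ K3 K1 b c a p x m3 p3 x3 a3 m1 p1 x1 a1 β γ α (w b) (w c) (w a)
            hβ.le hγ.le (by linarith) (by rw [hpe]; abel) hb hc ha (by linarith) (by rw [wx]; abel)
        · exact case_across a c b p o3 r3 α γ β hr3 (by linarith) (by rw [hpe]; abel) (by linarith)
            hα hγ hβ a3 c3 m3 p3
      · rcases lt_or_ge γ 0 with hγ | hγ
        · exact case_across a b c p o1 r1 α β γ hr1 hs hpe hg hα hβ hγ a1 b1 m1 p1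
        · exact case_inside a b c p α β γ hs hpe hg hα hβ hγ hpa hpb hpc
end
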